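/- arXiv:2405.08692 — 3 statements merged into one kernel-verified Lean document; each statement's English description precedes it below -/
import Mathlib

section
/- Let D ⊆ ℂ be a symmetric open set which is basic with closed-disc closure, i.e. either (slice case) D is nonempty, connected, simply connected, D ∩ ℝ ≠ ∅ and the closure of D is homeomorphic to the closed unit disc, or (product case) D = U ∪ conj(U) where U ⊆ ℂ⁺ is nonempty, open, connected, simply connected and the closure of U is homeomorphic to the closed unit disc. Let f : D → ℂ be holomorphic, nowhere vanishing and Schwarz symmetric, and in the slice case assume additionally that f > 0 on D ∩ ℝ. Let K ⊆ D be a symmetric compact set. Then there exist finitely many holomorphic, nowhere vanishing, Schwarz symmetric functions f₁, …, f_n : D → ℂ such that f = f₁ · f₂ ⋯ f_n on D and sup_{z ∈ K} |f_m(z) − 1| < 1 for every m = 1, …, n. -/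
open Set Metric

/-!
A Schwarz symmetric function `f` with a Schwarz symmetric holomorphic logarithm `g` is the `n`-th
power of `exp (g / n)`, and these roots tend to `1` uniformly on compact sets.

Simple connectivity provides a holomorphic logarithm. When the domain meets the real axis, the one
which is real at a real point is symmetric: `g` and its reflection are logarithms of the same
function and agree at that point. When the domain is the disjoint union of `U` and its mirror image,
a logarithm on `U` is extended by reflection.
-/

section

open Filter Topology ComplexConjugate

section Logarithm

variable {E : Type*} [NormedAddCommGroup E] [NormedSpace ℂ E]

theorem differentiableAt_of_differentiableAt_exp_comp {g : E → ℂ} {a : E} (hg : ContinuousAt g a)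
    (hexp : DifferentiableAt ℂ (Complex.exp ∘ g) a) : DifferentiableAt ℂ g a :=
  ((Complex.hasDerivAt_exp (g a)).hasFDerivAt.of_comp_of_leftInverse
    (f'symm := .toSpanSingleton ℂ (Complex.exp (g a))⁻¹) hg hexp.hasFDerivAt .rfl
    (fun _ => by simp)).differentiableAt

theorem exists_differentiableOn_exp_eqOn {U : Set E} (hUo : IsOpen U) (hUc : IsSimplyConnected U)
    {f : E → ℂ} (hf : DifferentiableOn ℂ f U) (hf0 : ∀ z ∈ U, f z ≠ 0) :
    ∃ g : E → ℂ, DifferentiableOn ℂ g U ∧ EqOn (Complex.exp ∘ g) f U := by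
  obtain ⟨g, hgc, hg⟩ := Complex.exists_continuousOn_eqOn_exp_comp hUc hUo hf.continuousOn
    (by rintro ⟨z, hz, hfz⟩; exact hf0 z hz hfz)
  refine ⟨g, fun z hz => DifferentiableAt.differentiableWithinAt ?_, hg⟩
  have hUz : U ∈ 𝓝 z := hUo.mem_nhds hz
  exact differentiableAt_of_differentiableAt_exp_comp (hgc.continuousAt hUz)
    ((hf.congr hg).differentiableAt hUz)

theorem exists_differentiableOn_exp_eqOn_of_exp_eq {U : Set E} (hUo : IsOpen U)
    (hUc : IsSimplyConnected U) {f : E → ℂ} (hf : DifferentiableOn ℂ f U)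
    (hf0 : ∀ z ∈ U, f z ≠ 0) {x : E} (hx : x ∈ U) {w : ℂ} (hw : Complex.exp w = f x) :
    ∃ g : E → ℂ, DifferentiableOn ℂ g U ∧ EqOn (Complex.exp ∘ g) f U ∧ g x = w := by
  obtain ⟨g, hgd, hg⟩ := exists_differentiableOn_exp_eqOn hUo hUc hf hf0
  refine ⟨fun z => g z + (w - g x), hgd.add_const _, fun z hz => ?_, add_sub_cancel _ _⟩
  have hgx : Complex.exp (g x) = f x := hg hx
  simp only [Function.comp_apply, Complex.exp_add, Complex.exp_sub, hw, hgx, div_self (hf0 x hx),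
    mul_one]
  exact hg hz

theorem eqOn_of_eqOn_exp_comp {X : Type*} [TopologicalSpace X] {s : Set X} (hs : IsPreconnected s)
    {g₁ g₂ : X → ℂ} (h₁ : ContinuousOn g₁ s) (h₂ : ContinuousOn g₂ s)
    (hexp : EqOn (Complex.exp ∘ g₁) (Complex.exp ∘ g₂) s) {x : X} (hx : x ∈ s)
    (heq : g₁ x = g₂ x) : EqOn g₁ g₂ s :=
  Complex.isCoveringMap_exp.eqOn_of_comp_eqOn hs h₁ h₂ (fun _ hz => Subtype.ext (hexp hz)) hx heq

theorem tendstoUniformlyOn_exp_div_natCast {X : Type*} {K : Set X} {g : X → ℂ} {M : ℝ}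
    (hg : ∀ z ∈ K, ‖g z‖ ≤ M) :
    TendstoUniformlyOn (fun (n : ℕ) z => Complex.exp (g z / n)) (fun _ => 1) atTop K := by
  rw [← tendsto_prod_principal_iff]
  have hinv : Tendsto (fun p : ℕ × X => (p.1 : ℂ)⁻¹) (atTop ×ˢ 𝓟 K) (𝓝 0) :=
    tendsto_inv_atTop_nhds_zero_nat.comp tendsto_fst
  have hbdd : IsBoundedUnder (· ≤ ·) (atTop ×ˢ 𝓟 K) ((‖·‖) ∘ fun p : ℕ × X => g p.2) :=
    isBoundedUnder_of_eventually_le (tendsto_snd.eventually (eventually_principal.2 hg))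
  have hdiv : Tendsto (fun p : ℕ × X => g p.2 / p.1) (atTop ×ˢ 𝓟 K) (𝓝 0) := by
    simpa only [div_eq_inv_mul] using hinv.zero_mul_isBoundedUnder_le hbdd
  simpa [Function.HasUncurry.uncurry] using hdiv.cexp

end Logarithm

theorem disjoint_image_conj_of_im_pos {U : Set ℂ} (hU : ∀ z ∈ U, 0 < z.im) :
    Disjoint U (conj '' U) := by
  refine disjoint_left.2 ?_
  rintro _ hz ⟨w, hw, rfl⟩
  exact (hU _ hz).not_ge (by simpa using (hU w hw).le)

/-- `f` is Schwarz symmetric on `D`: it commutes with complex conjugation there. The set `D` itself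
is not required to be symmetric. -/
def SchwarzSymmetricOn (f : ℂ → ℂ) (D : Set ℂ) : Prop :=
  ∀ z ∈ D, f (conj z) = conj (f z)

namespace SchwarzSymmetricOn

variable {f g : ℂ → ℂ} {D U K : Set ℂ}

theorem congr (hf : SchwarzSymmetricOn f D) (hD : MapsTo conj D D) (hgf : EqOn g f D) :
    SchwarzSymmetricOn g D := fun z hz => by
  rw [hgf (hD hz), hgf hz, hf z hz]

theorem union_image_conj (hf : SchwarzSymmetricOn f U) :
    SchwarzSymmetricOn f (U ∪ conj '' U) := by
  rintro z (hz | ⟨w, hw, rfl⟩)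
  · exact hf z hz
  · rw [hf w hw, Complex.conj_conj, Complex.conj_conj]

theorem eqOn_union_image_conj (hf : SchwarzSymmetricOn f U) (hg : SchwarzSymmetricOn g U)
    (hfg : EqOn f g U) : EqOn f g (U ∪ conj '' U) := by
  rintro z (hz | ⟨w, hw, rfl⟩)
  · exact hfg hz
  · rw [hf w hw, hg w hw, hfg hw]

theorem exp_comp (hg : SchwarzSymmetricOn g D) : SchwarzSymmetricOn (Complex.exp ∘ g) D :=
  fun z hz => by simp only [Function.comp_apply, hg z hz, Complex.exp_conj]

theorem div_natCast (hg : SchwarzSymmetricOn g D) (n : ℕ) :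
    SchwarzSymmetricOn (fun z => g z / n) D :=
  fun z hz => by simp only [hg z hz, map_div₀, Complex.conj_natCast]

theorem of_exp_comp (hD : IsPreconnected D) (hDsym : MapsTo conj D D) (hg : ContinuousOn g D)
    (hexp : SchwarzSymmetricOn (Complex.exp ∘ g) D) {x : ℂ} (hx : x ∈ D)
    (hgx : g (conj x) = conj (g x)) : SchwarzSymmetricOn g D := by
  have hconj : Continuous (conj : ℂ → ℂ) := Complex.continuous_conj
  refine eqOn_of_eqOn_exp_comp hD (hg.comp hconj.continuousOn hDsym) (hconj.comp_continuousOn hg)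
    (fun z hz => ?_) hx hgx
  simpa only [Function.comp_apply, Complex.exp_conj] using hexp z hz

theorem im_eq_zero (hf : SchwarzSymmetricOn f D) {x : ℂ} (hx : x ∈ D) (hxim : x.im = 0) :
    (f x).im = 0 := by
  rw [← Complex.conj_eq_iff_im, ← hf x hx, Complex.conj_eq_iff_im.2 hxim]

theorem exists_log_of_pos (hf : SchwarzSymmetricOn f D) (hDo : IsOpen D)
    (hDc : IsSimplyConnected D) (hDsym : MapsTo conj D D) (hfd : DifferentiableOn ℂ f D)
    (hf0 : ∀ z ∈ D, f z ≠ 0) {x : ℂ} (hx : x ∈ D) (hxim : x.im = 0) (hpos : 0 < (f x).re) :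
    ∃ g, DifferentiableOn ℂ g D ∧ EqOn (Complex.exp ∘ g) f D ∧ SchwarzSymmetricOn g D := by
  have hlog : Complex.exp (Real.log (f x).re) = f x := by
    rw [← Complex.ofReal_exp, Real.exp_log hpos]
    exact Complex.ext rfl (hf.im_eq_zero hx hxim).symm
  obtain ⟨g, hgd, hg, hgx⟩ := exists_differentiableOn_exp_eqOn_of_exp_eq hDo hDc hfd hf0 hx hlog
  refine ⟨g, hgd, hg, of_exp_comp hDc.isPathConnected.isConnected.isPreconnected hDsym
    hgd.continuousOn (hf.congr hDsym hg) hx ?_⟩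
  rw [Complex.conj_eq_iff_im.2 hxim, hgx, Complex.conj_ofReal]

theorem exists_extension (hU : IsOpen U) (hdisj : Disjoint U (conj '' U))
    (hg : DifferentiableOn ℂ g U) :
    ∃ G, DifferentiableOn ℂ G (U ∪ conj '' U) ∧ EqOn G g U ∧
      SchwarzSymmetricOn G (U ∪ conj '' U) := by
  classical
  have hUconj : IsOpen (conj '' U) := Complex.conjLIE.toHomeomorph.isOpen_image.2 hU
  let G : ℂ → ℂ := U.piecewise g (conj ∘ g ∘ conj)
  have hGU : EqOn G g U := piecewise_eqOn _ _ _
  have hGconj : EqOn G (conj ∘ g ∘ conj) (conj '' U) :=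
    (piecewise_eqOn_compl _ _ _).mono hdisj.subset_compl_left
  have hreflect : DifferentiableOn ℂ (conj ∘ g ∘ conj) (conj '' U) := by
    rintro _ ⟨w, hw, rfl⟩
    exact (hg.differentiableAt (hU.mem_nhds hw)).conj_conj.differentiableWithinAt
  have hGsymm : SchwarzSymmetricOn G U := fun z hz => by
    simp only [hGconj (mem_image_of_mem _ hz), hGU hz, Function.comp_apply, Complex.conj_conj]
  exact ⟨G, (hg.congr hGU).union_of_isOpen (hreflect.congr hGconj) hU hUconj, hGU,
    hGsymm.union_image_conj⟩

theorem exists_log_of_disjoint (hf : SchwarzSymmetricOn f U) (hUo : IsOpen U)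
    (hUc : IsSimplyConnected U) (hdisj : Disjoint U (conj '' U)) (hfd : DifferentiableOn ℂ f U)
    (hf0 : ∀ z ∈ U, f z ≠ 0) :
    ∃ g, DifferentiableOn ℂ g (U ∪ conj '' U) ∧ EqOn (Complex.exp ∘ g) f (U ∪ conj '' U) ∧
      SchwarzSymmetricOn g (U ∪ conj '' U) := by
  obtain ⟨g, hgd, hg⟩ := exists_differentiableOn_exp_eqOn hUo hUc hfd hf0
  obtain ⟨G, hGd, hGg, hGsymm⟩ := exists_extension hUo hdisj hgd
  have hGexp : EqOn (Complex.exp ∘ G) f U := hGg.comp_left.trans hg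
  have hGsymmU : SchwarzSymmetricOn G U := fun z hz => hGsymm z (Or.inl hz)
  exact ⟨G, hGd, hGsymmU.exp_comp.eqOn_union_image_conj hf hGexp, hGsymm⟩

theorem eventually_exists_eqOn_pow (hg : SchwarzSymmetricOn g D) (hgd : DifferentiableOn ℂ g D)
    (hgf : EqOn (Complex.exp ∘ g) f D) (hK : IsCompact K) (hKD : K ⊆ D) {ε : ℝ} (hε : 0 < ε) :
    ∀ᶠ n : ℕ in atTop, ∃ h : ℂ → ℂ, DifferentiableOn ℂ h D ∧ (∀ z ∈ D, h z ≠ 0) ∧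
      SchwarzSymmetricOn h D ∧ EqOn f (h ^ n) D ∧ ∀ z ∈ K, ‖h z - 1‖ < ε := by
  obtain ⟨M, hM⟩ := hK.exists_bound_of_continuousOn (hgd.continuousOn.mono hKD)
  filter_upwards [Metric.tendstoUniformlyOn_iff.1 (tendstoUniformlyOn_exp_div_natCast hM) ε hε,
    eventually_ne_atTop 0] with n hnear hn
  refine ⟨fun z => Complex.exp (g z / n), (hgd.div_const _).cexp, fun _ _ => Complex.exp_ne_zero _,
    (hg.div_natCast n).exp_comp, fun z hz => ?_, fun z hz => ?_⟩
  · have hnC : (n : ℂ) ≠ 0 := Nat.cast_ne_zero.2 hn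
    rw [Pi.pow_apply, ← Complex.exp_nat_mul, mul_div_cancel₀ _ hnC]
    exact (hgf hz).symm
  · simpa only [dist_comm, dist_eq_norm] using hnear z hz

end SchwarzSymmetricOn

theorem factorization_near_one_general {D : Set ℂ} {f : ℂ → ℂ}
    (hD : (IsOpen D ∧ IsSimplyConnected D ∧ MapsTo conj D D ∧
        ∃ x ∈ D, x.im = 0 ∧ 0 < (f x).re) ∨
      ∃ U : Set ℂ, IsOpen U ∧ IsSimplyConnected U ∧ Disjoint U (conj '' U) ∧ D = U ∪ conj '' U)
    (hfd : DifferentiableOn ℂ f D) (hf0 : ∀ z ∈ D, f z ≠ 0) (hf : SchwarzSymmetricOn f D)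
    {K : Set ℂ} (hK : IsCompact K) (hKD : K ⊆ D) {ε : ℝ} (hε : 0 < ε) :
    ∀ᶠ n : ℕ in atTop, ∃ h : ℂ → ℂ, DifferentiableOn ℂ h D ∧ (∀ z ∈ D, h z ≠ 0) ∧
      SchwarzSymmetricOn h D ∧ EqOn f (h ^ n) D ∧ ∀ z ∈ K, ‖h z - 1‖ < ε := by
  obtain ⟨g, hgd, hgf, hg⟩ :
      ∃ g, DifferentiableOn ℂ g D ∧ EqOn (Complex.exp ∘ g) f D ∧ SchwarzSymmetricOn g D := by
    rcases hD with ⟨hDo, hDc, hDsym, x, hx, hxim, hpos⟩ | ⟨U, hUo, hUc, hdisj, rfl⟩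
    · exact hf.exists_log_of_pos hDo hDc hDsym hfd hf0 hx hxim hpos
    · have hU : U ⊆ U ∪ conj '' U := subset_union_left
      exact SchwarzSymmetricOn.exists_log_of_disjoint (fun z hz => hf z (hU hz)) hUo hUc hdisj
        (hfd.mono hU) fun z hz => hf0 z (hU hz)
  exact hg.eventually_exists_eqOn_pow hgd hgf hK hKD hε

end

/-- Factorization into functions near `1`: on a basic symmetric domain `D` with
closed-disc closure, a holomorphic, nowhere vanishing, Schwarz symmetric function `f`
(positive on `D ∩ ℝ` in the slice case) factors, for any symmetric compact `K ⊆ D`,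
as a finite product of holomorphic nowhere vanishing Schwarz symmetric functions each
uniformly within `1` of the constant `1` on `K`. -/
theorem factorization_near_one (D : Set ℂ) (f : ℂ → ℂ)
    (hbasic :
      (D.Nonempty ∧ IsOpen D ∧ IsConnected D ∧ SimplyConnectedSpace D ∧
        (∃ x ∈ D, x.im = 0) ∧ (starRingEnd ℂ) '' D = D ∧
        Nonempty (closure D ≃ₜ closedBall (0 : ℂ) 1) ∧
        (∀ x ∈ D, x.im = 0 → 0 < (f x).re)) ∨
      (∃ U : Set ℂ, U.Nonempty ∧ IsOpen U ∧ IsConnected U ∧ SimplyConnectedSpace U ∧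
        (∀ z ∈ U, 0 < z.im) ∧ Nonempty (closure U ≃ₜ closedBall (0 : ℂ) 1) ∧
        D = U ∪ (starRingEnd ℂ) '' U))
    (hf : DifferentiableOn ℂ f D) (hfne : ∀ z ∈ D, f z ≠ 0)
    (hfsym : ∀ z ∈ D, f ((starRingEnd ℂ) z) = (starRingEnd ℂ) (f z))
    (K : Set ℂ) (hK : IsCompact K) (hKD : K ⊆ D) (hKsym : (starRingEnd ℂ) '' K = K) :
    ∃ (n : ℕ) (F : Fin n → (ℂ → ℂ)),
      (∀ m, DifferentiableOn ℂ (F m) D) ∧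
      (∀ m, ∀ z ∈ D, F m z ≠ 0) ∧
      (∀ m, ∀ z ∈ D, F m ((starRingEnd ℂ) z) = (starRingEnd ℂ) (F m z)) ∧
      (∀ z ∈ D, f z = ∏ m, F m z) ∧
      (∀ m, ∀ z ∈ K, ‖F m z - 1‖ < 1) := by
  obtain ⟨n, h, hd, h0, hsymm, hpow, hnear⟩ := (factorization_near_one_general
    (hbasic.imp
      (fun ⟨_, hDo, _, hDc, ⟨x, hx, hxim⟩, hDsym, _, hpos⟩ =>
        ⟨hDo, hDc, mapsTo_iff_image_subset.2 hDsym.subset, x, hx, hxim, hpos x hx hxim⟩)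
      (fun ⟨U, _, hUo, _, hUc, hUim, _, hDU⟩ =>
        ⟨U, hUo, hUc, disjoint_image_conj_of_im_pos hUim, hDU⟩))
    hf hfne hfsym hK hKD one_pos).exists
  exact ⟨n, fun _ => h, fun _ => hd, fun _ => h0, fun _ => hsymm,
    fun z hz => by simpa using hpow hz, fun _ => hnear⟩
end

section
/- Let D ⊆ ℂ be a nonempty symmetric open set, let 𝒰 be a locally finite symmetric open covering of D, and let Z ⊆ D be a symmetric set which is discrete and closed in D. Call an open set B ⊆ ℂ basic if it is symmetric and either B ∩ ℝ ≠ ∅ and B is nonempty, connected and simply connected, or B ∩ ℝ = ∅ and B = V ∪ conj(V) with V ⊆ ℂ⁺ nonempty, open, connected and simply connected. Then there exists a countable covering { B_n }_{n ∈ ℕ} of D by basic open sets such that: (i) each B_n is contained in some member of 𝒰; (ii) for distinct indices, every intersection B_{n₁} ∩ B_{n₂} and B_{n₁} ∩ B_{n₂} ∩ B_{n₃} is either empty or basic; (iii) if B_{n₁} ∩ ℝ ≠ ∅, B_{n₂} ∩ ℝ ≠ ∅, n₁ ≠ n₂ and B_{n₁} ∩ B_{n₂} ≠ ∅, then B_{n₁}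 ∩ B_{n₂} ∩ ℝ ≠ ∅; moreover for each n with B_n ∩ ℝ ≠ ∅ there are at most two indices n₁ ≠ n₂, both different from n, with B_{n_i} ∩ ℝ ≠ ∅ and B_n ∩ B_{n_i} ≠ ∅, and in that case B_{n₁} ∩ B_{n₂} = ∅; (iv) B_{n₁} ∩ B_{n₂} ∩ B_{n₃} ∩ B_{n₄} = ∅ for any four distinct indices; (v) B_{n₁} ∩ B_{n₂} ∩ Z = ∅ for n₁ ≠ n₂. -/
/-!
In the coordinates `arctan`, the reflection of `D` to the closed upper half-plane is the part of a
bounded open set `E` in a closed half-plane. Bisect a large box repeatedly, at cut values which are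
pairwise distinct and avoid the coordinates of `Z`. The maximal closed cells contained in a member
of the covering tile the half of `E`. They form a generic brick wall: for each of the two
coordinates, at most one cut is made at the value of a given point, so at most three cells meet at
a point, and at most two on the real axis, where no cut is made. There are
infinitely many cells, because the half of `E` is not compact.

By local finiteness the cells have open thickenings to boxes with the same nerve, avoiding the
points of `Z` in the other cells. Pulled back to the plane, these boxes are intervals times
symmetric sets, a class which is closed under intersection and whose nonempty members are basic.
Since no three boxes meet on the real axis and none has its real trace inside that of another, the
boxes on the real axis form a chain.
-/

open Set

/-- An open set `B ⊆ ℂ` is basic if it is symmetric under conjugation and either it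
meets the real axis and is nonempty, connected and simply connected, or it avoids the
real axis and is the union of a nonempty, open, connected, simply connected subset
`V` of the upper half-plane with its conjugate. -/
def IsBasicSet (B : Set ℂ) : Prop :=
  IsOpen B ∧ (starRingEnd ℂ) '' B = B ∧
    (((∃ x ∈ B, x.im = 0) ∧ B.Nonempty ∧ IsConnected B ∧ SimplyConnectedSpace B) ∨
      ((∀ x ∈ B, x.im ≠ 0) ∧ ∃ V : Set ℂ, V.Nonempty ∧ IsOpen V ∧ IsConnected V ∧
        SimplyConnectedSpace V ∧ (∀ z ∈ V, 0 < z.im) ∧ B = V ∪ (starRingEnd ℂ) '' V))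

open Filter Metric
open scoped ComplexConjugate Finset Function Interval Topology

/-! ### Branching of binary addresses -/

/-- The addresses `w` and `w'` branch off from their common suffix `u` in different directions. The
head of an address is its most recent choice, so that suffixes are ancestors. -/
def DivergeAt (u w w' : List Bool) : Prop :=
  ∃ b, (b :: u) <:+ w ∧ ((!b) :: u) <:+ w'

theorem eq_of_cons_suffix {u w : List Bool} {b c : Bool} (hb : (b :: u) <:+ w)
    (hc : (c :: u) <:+ w) : b = c := by
  simpa using (List.suffix_of_suffix_length_le hb hc (by simp)).eq_of_length (by simp)

theorem exists_divergeAt {w w' : List Bool} (h : ¬ w <:+ w') (h' : ¬ w' <:+ w) :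
    ∃ u, DivergeAt u w w' := by
  induction w with
  | nil => exact absurd List.nil_suffix h
  | cons a w ih =>
    by_cases hw : w <:+ w'
    · obtain ⟨t, rfl⟩ := hw
      rcases List.eq_nil_or_concat t with rfl | ⟨t, b, rfl⟩
      · simp at h'
      · have hab : b ≠ a := by
          rintro rfl
          exact h ⟨t, by simp⟩
        exact ⟨w, a, List.suffix_rfl, t, by simp [Bool.eq_not_of_ne hab]⟩
    · obtain ⟨u, b, hb, hb'⟩ := ih hw fun hc => h' (hc.trans (List.suffix_cons a w))
      exact ⟨u, b, hb.trans (List.suffix_cons a w), hb'⟩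

/-- Among the branching points choose a deepest one `u`: at most one address passes through
`true :: u`, and the remaining ones do not branch off from each other at `u`. -/
theorem card_le_card_add_one_of_divergeAt {N T : Finset (List Bool)}
    (h : (T : Set (List Bool)).Pairwise fun w w' => ∃ u ∈ N, DivergeAt u w w') :
    #T ≤ #N + 1 := by
  induction N using Finset.induction_on_max_value (ι := List Bool) (f := List.length)
    generalizing T with
  | empty => exact Finset.card_le_one.2 fun w hw w' hw' =>
      by_contra fun hne => by simpa using h hw hw' hne
  | insert u N hu hmax ih =>
    have hone : #{w ∈ T | (true :: u) <:+ w} ≤ 1 := by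
      simp only [Finset.card_le_one, Finset.mem_filter]
      rintro w ⟨hwT, hw⟩ w' ⟨hwT', hw'⟩
      by_contra hne
      obtain ⟨v, hv, b, hb, hb'⟩ := h hwT hwT' hne
      have hlen : v.length ≤ u.length := by
        rcases Finset.mem_insert.1 hv with rfl | hv
        exacts [le_rfl, hmax v hv]
      have hbu : (b :: v) <:+ (true :: u) :=
        List.suffix_of_suffix_length_le hb hw (by simpa using hlen)
      simpa using eq_of_cons_suffix (hbu.trans hw') hb'
    have hrest : #{w ∈ T | ¬ (true :: u) <:+ w} ≤ #N + 1 := by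
      refine ih fun w hw w' hw' hne => ?_
      simp only [Finset.coe_filter, mem_ofPred_eq] at hw hw'
      obtain ⟨v, hv, b, hb, hb'⟩ := h hw.1 hw'.1 hne
      rcases Finset.mem_insert.1 hv with rfl | hv
      · cases b
        exacts [absurd hb' hw'.2, absurd hb hw.2]
      · exact ⟨v, hv, b, hb, hb'⟩
    rw [← Finset.card_filter_add_card_filter_not fun w => (true :: u) <:+ w,
      Finset.card_insert_of_notMem hu]
    omega

/-! ### Recursive bisection of a box -/

theorem exists_pairwise_disjoint_dense {κ : Type*} [Countable κ] {A : Set ℝ} (hA : A.Countable) :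
    ∃ S : κ → Set ℝ, (∀ u, Dense (S u)) ∧ (∀ u, Disjoint (S u) A) ∧ Pairwise (Disjoint on S) := by
  -- Distinct cosets of `ℚ` are dense and disjoint, and uncountably many of them avoid `A`.
  let H : AddSubgroup ℝ := (Rat.castHom ℝ).toAddMonoidHom.range
  have : Countable H := (countable_range (Rat.castHom ℝ)).to_subtype
  have : Uncountable (ℝ ⧸ H) := ⟨fun _ => not_countable (α := ℝ)
    H.addGroupEquivQuotientProdAddSubgroup.injective.countable⟩
  have hinf : (QuotientAddGroup.mk (s := H) '' A)ᶜ.Infinite := fun hfin =>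
    not_countable_univ <| union_compl_self (QuotientAddGroup.mk (s := H) '' A) ▸
      (hA.image _).union hfin.countable
  obtain ⟨code, hcode⟩ := exists_injective_nat κ
  let c := fun u => hinf.natEmbedding _ (code u)
  refine ⟨fun u => QuotientAddGroup.mk ⁻¹' {(c u : ℝ ⧸ H)}, fun u => ?_, fun u => ?_, ?_⟩
  · obtain ⟨x, hx⟩ := QuotientAddGroup.mk_surjective (c u : ℝ ⧸ H)
    have hdense : DenseRange fun q : ℚ => x + q :=
      (Homeomorph.addLeft x).surjective.denseRange.comp Rat.denseRange_cast
        (Homeomorph.addLeft x).continuous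
    refine hdense.mono ?_
    rintro _ ⟨q, rfl⟩
    exact (QuotientAddGroup.mk_add_of_mem (s := H) x ⟨q, rfl⟩).trans hx
  · exact disjoint_left.2 fun y hy hyA => (c u).2 ⟨y, hyA, hy⟩
  · intro u v huv
    refine (disjoint_singleton.2 fun h => huv (hcode ?_)).preimage _
    exact (hinf.natEmbedding _).injective (Subtype.ext h)

/-- A recursive bisection of the box `[a, b]` in `ℝ ^ κ`: the box with address `u` is cut across
the coordinate `axis u.length` at the point chosen by `cut u` in the middle third of its edge. Every
coordinate is cut infinitely often and no two boxes are cut at the same value. -/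
structure BoxSubdivision {κ : Type*} (a b : κ → ℝ) where
  lt : ∀ s, a s < b s
  axis : ℕ → κ
  infinite_axis : ∀ s, {k | axis k = s}.Infinite
  cut : List Bool → ℝ → ℝ → ℝ
  cut_mem : ∀ u x y, x < y → cut u x y ∈ Ioo ((2 * x + y) / 3) ((x + 2 * y) / 3)
  eq_of_cut_eq : ∀ {u v x y x' y'}, cut u x y = cut v x' y' → u = v

namespace BoxSubdivision

variable {κ : Type*} [DecidableEq κ] {a b : κ → ℝ} (R : BoxSubdivision a b)

/-- The endpoints of the edges of the box with address `u`; prepending `true` to an address selects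
the upper half. -/
def edge : List Bool → κ → ℝ × ℝ
  | [] => fun s => (a s, b s)
  | upper :: u =>
    let e := edge u (R.axis u.length)
    let t := R.cut u e.1 e.2
    Function.update (edge u) (R.axis u.length) (if upper then (t, e.2) else (e.1, t))

/-- The lower corner of the box with address `u`. -/
def lower (u : List Bool) (s : κ) : ℝ := (R.edge u s).1

/-- The upper corner of the box with address `u`. -/
def upper (u : List Bool) (s : κ) : ℝ := (R.edge u s).2

/-- The value of the coordinate `R.axis u.length` at which the box with address `u` is cut. -/
def cutPoint (u : List Bool) : ℝ :=
  R.cut u (R.lower u (R.axis u.length)) (R.upper u (R.axis u.length))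

/-- The closed box with address `u`. -/
def cell (u : List Bool) : Set (κ → ℝ) := univ.pi fun s => Icc (R.lower u s) (R.upper u s)

theorem mem_cell {u : List Bool} {p : κ → ℝ} :
    p ∈ R.cell u ↔ ∀ s, p s ∈ Icc (R.lower u s) (R.upper u s) := mem_univ_pi

theorem cutPoint_injective : Function.Injective R.cutPoint := fun _ _ => R.eq_of_cut_eq

theorem edge_cons_self (c : Bool) (u : List Bool) :
    R.edge (c :: u) (R.axis u.length) =
      if c then (R.cutPoint u, R.upper u (R.axis u.length))
      else (R.lower u (R.axis u.length), R.cutPoint u) := Function.update_self ..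

theorem edge_cons_of_ne (c : Bool) {u : List Bool} {s : κ} (hs : s ≠ R.axis u.length) :
    R.edge (c :: u) s = R.edge u s := Function.update_of_ne hs ..

theorem lower_lt_upper (u : List Bool) (s : κ) : R.lower u s < R.upper u s := by
  induction u generalizing s with
  | nil => exact R.lt s
  | cons c u ih =>
    rcases eq_or_ne s (R.axis u.length) with rfl | hs
    · have h := ih (R.axis u.length)
      have hcut := R.cut_mem u _ _ h
      rw [lower, upper, edge_cons_self, cutPoint]
      cases c <;> simp only [Bool.false_eq_true, if_false, if_true] <;>
        linarith [hcut.1, hcut.2]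
    · simpa only [lower, upper, R.edge_cons_of_ne c hs] using ih s

theorem cutPoint_mem (u : List Bool) :
    R.cutPoint u ∈ Ioo ((2 * R.lower u (R.axis u.length) + R.upper u (R.axis u.length)) / 3)
      ((R.lower u (R.axis u.length) + 2 * R.upper u (R.axis u.length)) / 3) :=
  R.cut_mem u _ _ (R.lower_lt_upper u _)

theorem Icc_cons_subset (c : Bool) (u : List Bool) (s : κ) :
    Icc (R.lower (c :: u) s) (R.upper (c :: u) s) ⊆ Icc (R.lower u s) (R.upper u s) := by
  rcases eq_or_ne s (R.axis u.length) with rfl | hs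
  · obtain ⟨hlower, hupper⟩ := R.cutPoint_mem u
    have := R.lower_lt_upper u (R.axis u.length)
    rw [lower, upper, edge_cons_self]
    cases c
    · exact Icc_subset_Icc_right (show R.cutPoint u ≤ R.upper u _ by linarith)
    · exact Icc_subset_Icc_left (show R.lower u _ ≤ R.cutPoint u by linarith)
  · simp only [lower, upper, R.edge_cons_of_ne c hs, subset_rfl]

theorem cell_anti {u w : List Bool} (h : u <:+ w) : R.cell w ⊆ R.cell u := by
  obtain ⟨t, rfl⟩ := h
  induction t with
  | nil => exact subset_rfl
  | cons c t ih => exact (pi_mono fun s _ => R.Icc_cons_subset c (t ++ u) s).trans ih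

theorem isCompact_cell (u : List Bool) : IsCompact (R.cell u) :=
  isCompact_univ_pi fun _ => isCompact_Icc

theorem exists_mem_cell_cons {u : List Bool} {p : κ → ℝ} (hp : p ∈ R.cell u) :
    ∃ c, p ∈ R.cell (c :: u) := by
  have hmem : ∀ c : Bool, p (R.axis u.length) ∈ Icc (R.lower (c :: u) (R.axis u.length))
      (R.upper (c :: u) (R.axis u.length)) → p ∈ R.cell (c :: u) := by
    refine fun c hc => R.mem_cell.2 fun s => ?_
    rcases eq_or_ne s (R.axis u.length) with rfl | hs
    · exact hc
    · simpa only [lower, upper, R.edge_cons_of_ne c hs] using R.mem_cell.1 hp s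
  simp only [lower, upper, edge_cons_self] at hmem
  rcases le_total (p (R.axis u.length)) (R.cutPoint u) with h | h
  · exact ⟨false, hmem false ⟨(R.mem_cell.1 hp _).1, h⟩⟩
  · exact ⟨true, hmem true ⟨h, (R.mem_cell.1 hp _).2⟩⟩

theorem exists_mem_cell_of_length {p : κ → ℝ} (hp : p ∈ R.cell []) (k : ℕ) :
    ∃ u, u.length = k ∧ p ∈ R.cell u := by
  induction k with
  | zero => exact ⟨[], rfl, hp⟩
  | succ k ih =>
    obtain ⟨u, rfl, hu⟩ := ih
    obtain ⟨c, hc⟩ := R.exists_mem_cell_cons hu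
    exact ⟨c :: u, rfl, hc⟩

theorem eq_cutPoint_of_mem_cell_cons {u : List Bool} {p : κ → ℝ} {c : Bool}
    (h : p ∈ R.cell (c :: u)) (h' : p ∈ R.cell ((!c) :: u)) :
    p (R.axis u.length) = R.cutPoint u := by
  wlog hc : c = true generalizing c
  · exact this h' (by simpa using h) (by simpa using hc)
  subst hc
  have hle := (R.mem_cell.1 h (R.axis u.length)).1
  have hge := (R.mem_cell.1 h' (R.axis u.length)).2
  simp only [lower, upper, edge_cons_self] at hle hge
  exact le_antisymm hge hle

theorem upper_sub_lower_le (u : List Bool) (s : κ) :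
    R.upper u s - R.lower u s ≤
      (2 / 3) ^ Nat.count (fun k => R.axis k = s) u.length * (b s - a s) := by
  induction u with
  | nil => simp [upper, lower, edge]
  | cons c u ih =>
    rw [List.length_cons, Nat.count_succ]
    rcases eq_or_ne s (R.axis u.length) with rfl | hs
    · have hcut := R.cutPoint_mem u
      rw [if_pos rfl, pow_succ', lower, upper, edge_cons_self]
      cases c <;> simp only [Bool.false_eq_true, if_false, if_true] <;>
        linarith [hcut.1, hcut.2]
    · rw [if_neg hs.symm, add_zero, lower, upper, R.edge_cons_of_ne c hs]
      exact ih

theorem eventually_dist_lt [Fintype κ] {δ : ℝ} (hδ : 0 < δ) :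
    ∀ᶠ k in atTop, ∀ u, u.length = k → ∀ p ∈ R.cell u, ∀ q ∈ R.cell u, dist p q < δ := by
  have hcount : ∀ s, Tendsto (Nat.count fun k => R.axis k = s) atTop atTop := fun s =>
    tendsto_atTop_atTop_of_monotone (Nat.count_monotone _) fun n =>
      ⟨_, (Nat.count_nth_of_infinite (R.infinite_axis s) n).ge⟩
  have hwidth : ∀ᶠ k in atTop, ∀ s,
      (2 / 3 : ℝ) ^ Nat.count (fun k => R.axis k = s) k * (b s - a s) < δ := by
    refine eventually_all.2 fun s => Tendsto.eventually_lt_const hδ ?_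
    simpa using ((tendsto_pow_atTop_nhds_zero_of_lt_one (r := (2 / 3 : ℝ)) (by norm_num)
      (by norm_num)).comp (hcount s)).mul_const (b s - a s)
  filter_upwards [hwidth] with k hk u hu p hp q hq
  subst hu
  refine (dist_pi_lt_iff hδ).2 fun s => (Real.dist_le_of_mem_Icc ?_ ?_).trans_lt
    ((R.upper_sub_lower_le u s).trans_lt (hk s))
  exacts [R.mem_cell.1 hp s, R.mem_cell.1 hq s]

end BoxSubdivision

theorem exists_boxSubdivision_cutPoint_notMem {κ : Type*} [DecidableEq κ] [Countable κ] [Nonempty κ]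
    {a b : κ → ℝ} (hab : ∀ s, a s < b s) {A : Set ℝ} (hA : A.Countable) :
    ∃ R : BoxSubdivision a b, ∀ u, R.cutPoint u ∉ A := by
  obtain ⟨S, hdense, havoid, hdisj⟩ := exists_pairwise_disjoint_dense (κ := List Bool) hA
  have hcut : ∀ u x y, ∃ t ∈ S u, x < y → t ∈ Ioo ((2 * x + y) / 3) ((x + 2 * y) / 3) := by
    intro u x y
    rcases lt_or_ge x y with hxy | hxy
    · obtain ⟨t, ht, htS⟩ := (hdense u).exists_between
        (show (2 * x + y) / 3 < (x + 2 * y) / 3 by linarith)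
      exact ⟨t, ht, fun _ => htS⟩
    · obtain ⟨t, ht⟩ := (hdense u).nonempty
      exact ⟨t, ht, fun h => absurd h hxy.not_gt⟩
  choose cut hcutS hcut using hcut
  obtain ⟨f, hf⟩ := exists_surjective_nat κ
  refine ⟨⟨hab, fun k => f k.unpair.1, fun s => ?_, cut, hcut, fun {u v x y x' y'} h => ?_⟩,
    fun u => disjoint_left.1 (havoid u) (hcutS ..)⟩
  · obtain ⟨i, rfl⟩ := hf s
    refine (infinite_range_of_injective (f := Nat.pair i) fun j k h => ?_).mono ?_
    · exact (Nat.pair_eq_pair.1 h).2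
    · rintro _ ⟨j, rfl⟩
      simp
  · exact hdisj.eq (not_disjoint_iff.2 ⟨_, hcutS u x y, h ▸ hcutS v x' y'⟩)

/-! ### Maximal cells -/

namespace BoxSubdivision

variable {κ : Type*} [DecidableEq κ] {a b : κ → ℝ} (R : BoxSubdivision a b)
  {ι : Type*} (V : ι → Set (κ → ℝ))

/-- The cell with address `w` is maximal among the cells contained in a member of the family `V`. -/
def IsMaximal (w : List Bool) : Prop :=
  (∃ i, R.cell w ⊆ V i) ∧ ∀ u, u <:+ w → u ≠ w → ∀ i, ¬ R.cell u ⊆ V i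

variable {R V}

theorem exists_suffix_isMaximal {u : List Bool} (hu : ∃ i, R.cell u ⊆ V i) :
    ∃ w, w <:+ u ∧ R.IsMaximal V w := by
  obtain ⟨w, ⟨hwu, hw⟩, hmin⟩ := (measure List.length).wf.has_min
    {w | w <:+ u ∧ ∃ i, R.cell w ⊆ V i} ⟨u, List.suffix_rfl, hu⟩
  refine ⟨w, hwu, hw, fun v hv hne i hi => hmin v ⟨hv.trans hwu, i, hi⟩ ?_⟩
  exact lt_of_le_of_ne hv.length_le fun h => hne (hv.eq_of_length h)

theorem IsMaximal.exists_divergeAt {w w' : List Bool} (hw : R.IsMaximal V w)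
    (hw' : R.IsMaximal V w') (hne : w ≠ w') {p : κ → ℝ} (hp : p ∈ R.cell w)
    (hp' : p ∈ R.cell w') : ∃ u, DivergeAt u w w' ∧ p (R.axis u.length) = R.cutPoint u := by
  obtain ⟨i, hi⟩ := hw.1
  obtain ⟨i', hi'⟩ := hw'.1
  obtain ⟨u, c, hc, hc'⟩ := _root_.exists_divergeAt (fun h => hw'.2 w h hne i hi)
    fun h => hw.2 w' h hne.symm i' hi'
  exact ⟨u, ⟨c, hc, hc'⟩,
    R.eq_cutPoint_of_mem_cell_cons (R.cell_anti hc hp) (R.cell_anti hc' hp')⟩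

theorem IsMaximal.eq_of_mem_cell {w w' : List Bool} (hw : R.IsMaximal V w)
    (hw' : R.IsMaximal V w') {p : κ → ℝ} (hgen : ∀ s, p s ∉ range R.cutPoint)
    (hp : p ∈ R.cell w) (hp' : p ∈ R.cell w') : w = w' := by
  by_contra hne
  obtain ⟨u, -, hu⟩ := hw.exists_divergeAt hw' hne hp hp'
  exact hgen _ ⟨u, hu.symm⟩

open Classical in
theorem card_le_of_isMaximal [Fintype κ] {p : κ → ℝ} {T : Finset (List Bool)}
    (hT : ∀ w ∈ T, R.IsMaximal V w ∧ p ∈ R.cell w) :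
    #T ≤ #{s | p s ∈ range R.cutPoint} + 1 := by
  let address : ℝ → List Bool := Function.invFun R.cutPoint
  refine (card_le_card_add_one_of_divergeAt
    (N := Finset.image (fun s => address (p s)) {s | p s ∈ range R.cutPoint})
    fun w hw w' hw' hne => ?_).trans (by gcongr; exact Finset.card_image_le)
  obtain ⟨u, hdiv, hu⟩ := (hT w hw).1.exists_divergeAt (hT w' hw').1 hne (hT w hw).2 (hT w' hw').2
  refine ⟨u, Finset.mem_image.2 ⟨R.axis u.length, by simp [hu], ?_⟩, hdiv⟩
  rw [hu]
  exact Function.leftInverse_invFun R.cutPoint_injective u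

theorem card_le_card_of_isMaximal_of_lower_eq [Fintype κ] {s : κ} {c : ℝ}
    (hc : c ∉ range R.cutPoint) {p : κ → ℝ} {T : Finset (List Bool)}
    (hT : ∀ w ∈ T, R.IsMaximal V w ∧ p ∈ R.cell w ∧ R.lower w s = c) :
    #T ≤ Fintype.card κ := by
  classical
  have hface : ∀ w ∈ T, R.IsMaximal V w ∧ Function.update p s c ∈ R.cell w := by
    refine fun w hw => ⟨(hT w hw).1, (update_mem_pi_iff_of_mem (hT w hw).2.1).2 fun _ => ?_⟩
    rw [← (hT w hw).2.2]
    exact left_mem_Icc.2 (R.lower_lt_upper w s).le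
  refine (card_le_of_isMaximal hface).trans (Nat.succ_le_of_lt (Finset.card_lt_univ_of_notMem
    (x := s) ?_))
  simpa using hc

theorem exists_nhds_forall_length [Finite κ] (hV : ∀ i, IsOpen (V i)) {p : κ → ℝ}
    (hp : p ∈ ⋃ i, V i) : ∃ N ∈ 𝓝 p, ∃ k, ∀ u, u.length = k → (R.cell u ∩ N).Nonempty →
      ∃ i, R.cell u ⊆ V i := by
  cases nonempty_fintype κ
  obtain ⟨i, hi⟩ := mem_iUnion.1 hp
  obtain ⟨r, hr, hball⟩ := Metric.isOpen_iff.1 (hV i) p hi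
  obtain ⟨k, hk⟩ := (R.eventually_dist_lt (half_pos hr)).exists
  refine ⟨_, Metric.ball_mem_nhds p (half_pos hr), k, fun u hu ⟨q, hqu, hq⟩ =>
    ⟨i, fun x hx => hball ?_⟩⟩
  calc dist x p ≤ dist x q + dist q p := dist_triangle x q p
    _ < r / 2 + r / 2 := add_lt_add (hk u hu x hx q hqu) hq
    _ = r := add_halves r

theorem exists_nhds_finite_isMaximal [Finite κ] (hV : ∀ i, IsOpen (V i)) {p : κ → ℝ}
    (hp : p ∈ ⋃ i, V i) : ∃ N ∈ 𝓝 p, {w | R.IsMaximal V w ∧ (R.cell w ∩ N).Nonempty}.Finite := by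
  obtain ⟨N, hN, k, hk⟩ := exists_nhds_forall_length (R := R) hV hp
  refine ⟨N, hN, (List.finite_length_le Bool k).subset ?_⟩
  rintro w ⟨hw, hwN⟩
  by_contra hlen
  replace hlen : k < w.length := not_le.1 hlen
  obtain ⟨u, hu, huw⟩ : ∃ u, u.length = k ∧ u <:+ w :=
    ⟨w.drop (w.length - k), by simp; omega, List.drop_suffix _ _⟩
  obtain ⟨i, hi⟩ := hk u hu (hwN.mono (inter_subset_inter_left N (R.cell_anti huw)))
  exact hw.2 u huw (fun h => hlen.ne (hu ▸ h ▸ rfl)) i hi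

theorem biUnion_cell_isMaximal [Finite κ] (hV : ∀ i, IsOpen (V i)) :
    ⋃ w ∈ {w | R.IsMaximal V w}, R.cell w = (⋃ i, V i) ∩ R.cell [] := by
  refine Subset.antisymm (iUnion₂_subset fun w hw => ?_) fun p ⟨hpV, hproot⟩ => ?_
  · obtain ⟨i, hi⟩ := hw.1
    exact subset_inter (hi.trans (subset_iUnion V i)) (R.cell_anti List.nil_suffix)
  · obtain ⟨N, hN, k, hk⟩ := exists_nhds_forall_length (R := R) hV hpV
    obtain ⟨u, hu, hpu⟩ := R.exists_mem_cell_of_length hproot k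
    obtain ⟨w, hwu, hw⟩ := exists_suffix_isMaximal (hk u hu ⟨p, hpu, mem_of_mem_nhds hN⟩)
    exact mem_biUnion hw (R.cell_anti hwu hpu)

theorem infinite_isMaximal [Finite κ] (hV : ∀ i, IsOpen (V i))
    (h : ¬ IsCompact ((⋃ i, V i) ∩ R.cell [])) : {w | R.IsMaximal V w}.Infinite := fun hfin =>
  h <| biUnion_cell_isMaximal hV ▸ hfin.isCompact_biUnion fun w _ => R.isCompact_cell w

variable (R) in
theorem exists_mem_cell_notMem_range_cutPoint (w : List Bool) :
    ∃ x ∈ R.cell w, ∀ s, x s ∉ range R.cutPoint ∧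
      (R.lower w s ∉ range R.cutPoint → x s = R.lower w s) := by
  have hcoord : ∀ s, ∃ t ∈ Icc (R.lower w s) (R.upper w s), t ∉ range R.cutPoint ∧
      (R.lower w s ∉ range R.cutPoint → t = R.lower w s) := by
    intro s
    by_cases h : R.lower w s ∈ range R.cutPoint
    · obtain ⟨t, ht, hts⟩ := ((countable_range R.cutPoint).dense_compl ℝ).exists_between
        (R.lower_lt_upper w s)
      exact ⟨t, Ioo_subset_Icc_self hts, ht, fun h' => absurd h h'⟩
    · exact ⟨_, left_mem_Icc.2 (R.lower_lt_upper w s).le, h, fun _ => rfl⟩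
  choose x hx hgen using hcoord
  exact ⟨x, R.mem_cell.2 hx, hgen⟩

end BoxSubdivision

theorem not_isCompact_inter_setOf_le {κ : Type*} {E : Set (κ → ℝ)} (hE : IsOpen E) {s : κ}
    {c : ℝ} (hne : (E ∩ {p | c ≤ p s}).Nonempty) : ¬ IsCompact (E ∩ {p | c ≤ p s}) := by
  classical
  intro hcomp
  obtain ⟨q, ⟨hqE, hq⟩, hmax⟩ := hcomp.exists_isMaxOn hne (continuous_apply s).continuousOn
  have hnear : ∀ᶠ t in 𝓝 (q s), Function.update q s t ∈ E :=
    (continuous_const.update s continuous_id).continuousAt.eventually_mem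
      (hE.mem_nhds (by simpa using hqE))
  obtain ⟨t, hlt, ht⟩ := hnear.exists_gt
  have hle : t ≤ q s := by simpa using hmax (show Function.update q s t ∈ E ∩ {p | c ≤ p s} from
    ⟨ht, by simpa using hq.trans hlt.le⟩)
  exact hle.not_gt hlt

/-! ### Thickening of compact families -/

theorem thickening_pi {κ : Type*} [Fintype κ] {X : κ → Type*} [∀ s, PseudoMetricSpace (X s)]
    {ε : ℝ} (hε : 0 < ε) (K : ∀ s, Set (X s)) :
    thickening ε (univ.pi K) = univ.pi fun s => thickening ε (K s) := by
  ext p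
  simp only [mem_thickening_iff, mem_univ_pi, dist_pi_lt_iff hε]
  refine ⟨fun ⟨q, hq, hpq⟩ s => ⟨q s, hq s, hpq s⟩, fun h => ?_⟩
  choose q hq hpq using h
  exact ⟨q, hq, hpq⟩

theorem isOpen_diff_of_compl_mem_codiscreteWithin {X : Type*} [TopologicalSpace X] {E S : Set X}
    (hE : IsOpen E) (hS : Sᶜ ∈ codiscreteWithin E) : IsOpen (E \ S) := by
  refine isOpen_iff_mem_nhds.2 fun x ⟨hxE, hxS⟩ => ?_
  have hmem : Sᶜ ∪ Eᶜ ∈ 𝓝 x := by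
    rw [← insert_eq_of_mem (show x ∈ Sᶜ ∪ Eᶜ from Or.inl hxS)]
    exact insert_mem_nhds_iff.2 (mem_codiscreteWithin_iff_forall_mem_nhdsNE.1 hS x hxE)
  filter_upwards [hE.mem_nhds hxE, hmem] with y hyE hy
  exact ⟨hyE, hy.resolve_right (not_not_intro hyE)⟩

theorem exists_ball_forall_mem_of_inter_nonempty {X ι : Type*} [PseudoMetricSpace X]
    {K : ι → Set X} (hK : ∀ i, IsClosed (K i)) {x : X}
    (hx : ∃ N ∈ 𝓝 x, {i | (K i ∩ N).Nonempty}.Finite) :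
    ∃ r > 0, ∀ i, (K i ∩ ball x r).Nonempty → x ∈ K i := by
  obtain ⟨N, hN, hfin⟩ := hx
  have hmem : N ∩ ⋂ i ∈ {i | (K i ∩ N).Nonempty ∧ x ∉ K i}, (K i)ᶜ ∈ 𝓝 x :=
    inter_mem hN ((biInter_mem (hfin.subset fun i hi => hi.1)).2
      fun i hi => (hK i).isOpen_compl.mem_nhds hi.2)
  obtain ⟨r, hr, hball⟩ := Metric.mem_nhds_iff.1 hmem
  refine ⟨r, hr, fun i ⟨y, hyK, hy⟩ => by_contra fun hxi => ?_⟩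
  obtain ⟨hyN, hyK'⟩ := hball hy
  exact mem_iInter₂.1 hyK' i ⟨⟨y, hyK, hyN⟩, hxi⟩ hyK

theorem exists_thickening_subset_nerve {X ι : Type*} [MetricSpace X]
    {E : Set X} {K V : ι → Set X} (hK : ∀ i, IsCompact (K i)) (hKE : ∀ i, K i ⊆ E)
    (hlf : ∀ p ∈ E, ∃ N ∈ 𝓝 p, {i | (K i ∩ N).Nonempty}.Finite)
    (hV : ∀ i, IsOpen (V i)) (hKV : ∀ i, K i ⊆ V i) :
    ∃ ε : ι → ℝ, (∀ i, 0 < ε i) ∧ (∀ i, thickening (ε i) (K i) ⊆ V i) ∧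
      ∀ (p : X) (T : Finset ι), (∀ i ∈ T, p ∈ thickening (ε i) (K i)) →
        ∃ x, ∀ i ∈ T, x ∈ K i := by
  choose r hr0 hr using fun x : E =>
    exists_ball_forall_mem_of_inter_nonempty (fun i => (hK i).isClosed) (hlf x x.2)
  have hδ : ∀ i, ∃ δ > 0, ∀ q ∈ K i, ∃ x : E, ball q δ ⊆ ball (x : X) (r x) := fun i =>
    lebesgue_number_lemma_of_metric (hK i) (fun _ => isOpen_ball)
      fun q hq => mem_iUnion.2 ⟨⟨q, hKE i hq⟩, mem_ball_self (hr0 _)⟩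
  choose δ hδ0 hδ using hδ
  choose η hη0 hη using fun i => (hK i).exists_thickening_subset_open (hV i) (hKV i)
  refine ⟨fun i => min (δ i / 2) (η i), fun i => lt_min (half_pos (hδ0 i)) (hη0 i),
    fun i => (thickening_mono (min_le_right _ _) _).trans (hη i), fun p T hp => ?_⟩
  rcases T.eq_empty_or_nonempty with rfl | hT
  · exact ⟨p, by simp⟩
  -- The Lebesgue ball of the most thickened member meets every other member.
  obtain ⟨i, hi, hmax⟩ := T.exists_max_image (fun i => min (δ i / 2) (η i)) hT
  obtain ⟨q, hq, hpq⟩ := mem_thickening_iff.1 (hp i hi)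
  obtain ⟨x, hx⟩ := hδ i q hq
  refine ⟨x, fun j hj => hr x j ?_⟩
  obtain ⟨q', hq', hpq'⟩ := mem_thickening_iff.1 (hp j hj)
  refine ⟨q', hq', hx (mem_ball.2 ?_)⟩
  calc dist q' q ≤ dist p q' + dist p q := dist_triangle_left q' q p
    _ < δ i / 2 + δ i / 2 := add_lt_add
      (hpq'.trans_le ((hmax j hj).trans (min_le_left _ _))) (hpq.trans_le (min_le_left _ _))
    _ = δ i := add_halves _

theorem exists_isOpen_ordConnected_pi_nerve {κ ι : Type*} [Finite κ] {E : Set (κ → ℝ)}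
    {l u : ι → κ → ℝ} {W : ι → Set (κ → ℝ)}
    (hE : ∀ i, univ.pi (fun s => Icc (l i s) (u i s)) ⊆ E)
    (hlf : ∀ p ∈ E,
      ∃ N ∈ 𝓝 p, {i | (univ.pi (fun s => Icc (l i s) (u i s)) ∩ N).Nonempty}.Finite)
    (hW : ∀ i, IsOpen (W i)) (hsub : ∀ i, univ.pi (fun s => Icc (l i s) (u i s)) ⊆ W i) :
    ∃ I : ι → κ → Set ℝ, (∀ i s, IsOpen (I i s)) ∧ (∀ i s, (I i s).OrdConnected) ∧
      (∀ i s, Icc (l i s) (u i s) ⊆ I i s) ∧ (∀ i, univ.pi (I i) ⊆ W i) ∧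
      ∀ (p : κ → ℝ) (T : Finset ι), (∀ i ∈ T, p ∈ univ.pi (I i)) →
        ∃ x, ∀ i ∈ T, x ∈ univ.pi fun s => Icc (l i s) (u i s) := by
  cases nonempty_fintype κ
  obtain ⟨ε, hε, hεW, hnerve⟩ := exists_thickening_subset_nerve
    (fun i => isCompact_univ_pi fun s => isCompact_Icc) hE hlf hW hsub
  simp only [thickening_pi (hε _)] at hεW hnerve
  exact ⟨fun i s => thickening (ε i) (Icc (l i s) (u i s)), fun i s => isOpen_thickening,
    fun i s => ((convex_Icc _ _).thickening _).ordConnected,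
    fun i s => self_subset_thickening (hε i) _, hεW, hnerve⟩

/-! ### Box coverings of a half-space -/

/-- A sequence of open boxes `univ.pi (I n)` covering the part of `⋃ i, V i` in the closed
half-space `{p | 0 ≤ p s₀}`: each box lies in a member of `V` and reaches the boundary hyperplane
only if it crosses it, and the overlaps are as few as in a generic brick wall. -/
structure IsHalfSpaceBoxCovering {κ : Type*} [Fintype κ] (s₀ : κ) {ι : Type*}
    (V : ι → Set (κ → ℝ)) (Z : Set (κ → ℝ)) (I : ℕ → κ → Set ℝ) : Prop where
  isOpen : ∀ n s, IsOpen (I n s)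
  ordConnected : ∀ n s, (I n s).OrdConnected
  zero_mem_or_subset : ∀ n, 0 ∈ I n s₀ ∨ I n s₀ ⊆ Ioi 0
  exists_mem : ∀ n, ∃ p ∈ univ.pi (I n), 0 ≤ p s₀
  exists_subset : ∀ n, ∃ i, univ.pi (I n) ⊆ V i
  covers : ∀ p ∈ ⋃ i, V i, 0 ≤ p s₀ → ∃ n, p ∈ univ.pi (I n)
  card_le : ∀ p (T : Finset ℕ), (∀ n ∈ T, p ∈ univ.pi (I n)) → #T ≤ Fintype.card κ + 1
  card_le_of_zero_mem : ∀ p (T : Finset ℕ), (∀ n ∈ T, p ∈ univ.pi (I n) ∧ 0 ∈ I n s₀) →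
    #T ≤ Fintype.card κ
  eq_of_mem : ∀ z ∈ Z, ∀ m n, z ∈ univ.pi (I m) → z ∈ univ.pi (I n) → m = n
  eq_of_subset : ∀ m n, 0 ∈ I m s₀ → 0 ∈ I n s₀ → (∀ s ≠ s₀, I m s ⊆ I n s) → m = n

/-- Closed boxes tiling the part of `⋃ i, V i` in the half-space `{p | 0 ≤ p s₀}` in generic
position: thickening them slightly gives the boxes of an `IsHalfSpaceBoxCovering`. The points of
`G`, at least one in each box, stay in a single box during the process. -/
structure IsHalfSpaceBoxTiling {κ : Type*} [Fintype κ] (s₀ : κ) {ι : Type*}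
    (V : ι → Set (κ → ℝ)) (G : Set (κ → ℝ)) (l u : ℕ → κ → ℝ) : Prop where
  nonneg : ∀ n, 0 ≤ l n s₀
  exists_subset : ∀ n, ∃ i, univ.pi (fun s => Icc (l n s) (u n s)) ⊆ V i
  exists_nhds_finite : ∀ p ∈ ⋃ i, V i,
    ∃ N ∈ 𝓝 p, {n | (univ.pi (fun s => Icc (l n s) (u n s)) ∩ N).Nonempty}.Finite
  covers : ∀ p ∈ ⋃ i, V i, 0 ≤ p s₀ → ∃ n, p ∈ univ.pi fun s => Icc (l n s) (u n s)
  card_le : ∀ p (T : Finset ℕ), (∀ n ∈ T, p ∈ univ.pi fun s => Icc (l n s) (u n s)) →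
    #T ≤ Fintype.card κ + 1
  card_le_of_eq_zero : ∀ p (T : Finset ℕ),
    (∀ n ∈ T, p ∈ univ.pi (fun s => Icc (l n s) (u n s)) ∧ l n s₀ = 0) → #T ≤ Fintype.card κ
  codiscrete : Gᶜ ∈ codiscreteWithin (⋃ i, V i)
  exists_mem : ∀ n, ∃ x ∈ G, x ∈ univ.pi (fun s => Icc (l n s) (u n s)) ∧
    (l n s₀ = 0 → x s₀ = 0)
  eq_of_mem : ∀ x ∈ G, ∀ m n, x ∈ univ.pi (fun s => Icc (l m s) (u m s)) →
    x ∈ univ.pi (fun s => Icc (l n s) (u n s)) → m = n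

namespace IsHalfSpaceBoxTiling

variable {κ : Type*} [Fintype κ] {s₀ : κ} {ι : Type*} {V : ι → Set (κ → ℝ)} {G : Set (κ → ℝ)}
  {l u : ℕ → κ → ℝ}

theorem exists_isOpen_ordConnected_pi (h : IsHalfSpaceBoxTiling s₀ V G l u)
    (hV : ∀ i, IsOpen (V i)) :
    ∃ I : ℕ → κ → Set ℝ, (∀ n s, IsOpen (I n s)) ∧ (∀ n s, (I n s).OrdConnected) ∧
      (∀ n, univ.pi (fun s => Icc (l n s) (u n s)) ⊆ univ.pi (I n)) ∧
      (∀ n, ∃ i, univ.pi (I n) ⊆ V i) ∧ (∀ n, l n s₀ = 0 ∨ I n s₀ ⊆ Ioi 0) ∧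
      (∀ n, ∀ x ∈ G, x ∈ univ.pi (I n) → x ∈ univ.pi fun s => Icc (l n s) (u n s)) ∧
      ∀ (p : κ → ℝ) (T : Finset ℕ), (∀ n ∈ T, p ∈ univ.pi (I n)) →
        ∃ x, ∀ n ∈ T, x ∈ univ.pi fun s => Icc (l n s) (u n s) := by
  classical
  choose i hi using h.exists_subset
  choose x _ hx _ using h.exists_mem
  let W : ℕ → Set (κ → ℝ) := fun n => (V (i n) ∩ {p | l n s₀ = 0 ∨ 0 < p s₀}) ∩
    ((⋃ i, V i) \ (G \ univ.pi fun s => Icc (l n s) (u n s)))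
  have hWopen : ∀ n, IsOpen (W n) := by
    refine fun n => ((hV _).inter ?_).inter (isOpen_diff_of_compl_mem_codiscreteWithin
      (isOpen_iUnion hV) (mem_of_superset h.codiscrete (compl_subset_compl.2 sdiff_subset)))
    exact isOpen_const.union (isOpen_lt continuous_const (continuous_apply s₀))
  have hsub : ∀ n, univ.pi (fun s => Icc (l n s) (u n s)) ⊆ W n := fun n p hp => ⟨⟨hi n hp,
    (h.nonneg n).eq_or_lt'.imp_right fun hl => hl.trans_le (hp s₀ (mem_univ _)).1⟩,
    mem_iUnion_of_mem _ (hi n hp), fun hpG => hpG.2 hp⟩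
  obtain ⟨I, hopen, hord, hlI, hIW, hnerve⟩ := exists_isOpen_ordConnected_pi_nerve
    (fun n => (hi n).trans (subset_iUnion V _)) h.exists_nhds_finite hWopen hsub
  have hmono : ∀ n, univ.pi (fun s => Icc (l n s) (u n s)) ⊆ univ.pi (I n) := fun n =>
    pi_mono fun s _ => hlI n s
  refine ⟨I, hopen, hord, hmono, fun n => ⟨i n, fun p hp => (hIW n hp).1.1⟩,
    fun n => or_iff_not_imp_left.2 fun hl t ht => ?_,
    fun n y hyG hy => by_contra fun hyK => (hIW n hy).2.2 ⟨hyG, hyK⟩, hnerve⟩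
  simpa [hl] using (hIW n ((update_mem_pi_iff_of_mem (hmono n (hx n))).2 fun _ => ht)).1.2

theorem exists_isHalfSpaceBoxCovering (h : IsHalfSpaceBoxTiling s₀ V G l u)
    (hV : ∀ i, IsOpen (V i)) : ∃ I, IsHalfSpaceBoxCovering s₀ V G I := by
  obtain ⟨I, hopen, hord, hsub, hIV, hlower, hG, hnerve⟩ := h.exists_isOpen_ordConnected_pi hV
  choose x hxG hx hx0 using h.exists_mem
  have hzero : ∀ n, 0 ∈ I n s₀ → l n s₀ = 0 := fun n h0 =>
    (hlower n).resolve_right fun hpos => lt_irrefl (0 : ℝ) (hpos h0)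
  refine ⟨I, {
    isOpen := hopen
    ordConnected := hord
    zero_mem_or_subset := fun n => (hlower n).imp_left fun hl =>
      hx0 n hl ▸ hsub n (hx n) s₀ (mem_univ _)
    exists_mem := fun n =>
      ⟨x n, hsub n (hx n), (h.nonneg n).trans (hx n s₀ (mem_univ _)).1⟩
    exists_subset := hIV
    covers := fun p hp hp0 => (h.covers p hp hp0).imp fun n hn => hsub n hn
    card_le := fun p T hT => ?_
    card_le_of_zero_mem := fun p T hT => ?_
    eq_of_mem := fun z hz m n hm hn => h.eq_of_mem z hz m n (hG m z hz hm) (hG n z hz hn)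
    eq_of_subset := fun m n hm hn hmn =>
      h.eq_of_mem (x m) (hxG m) m n (hx m) (hG n _ (hxG m) fun s _ => ?_) }⟩
  · obtain ⟨q, hq⟩ := hnerve p T hT
    exact h.card_le q T hq
  · obtain ⟨q, hq⟩ := hnerve p T fun n hn => (hT n hn).1
    exact h.card_le_of_eq_zero q T fun n hn => ⟨hq n hn, hzero n (hT n hn).2⟩
  · rcases eq_or_ne s s₀ with rfl | hs
    · exact hx0 m (hzero m hm) ▸ hn
    · exact hmn s hs (hsub m (hx m) s (mem_univ s))

end IsHalfSpaceBoxTiling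

namespace BoxSubdivision

variable {κ : Type*} [DecidableEq κ] {a b : κ → ℝ} {R : BoxSubdivision a b}
  {ι : Type*} {V : ι → Set (κ → ℝ)}

theorem le_lower (R : BoxSubdivision a b) (w : List Bool) (s : κ) : a s ≤ R.lower w s :=
  (R.mem_cell.1 (R.cell_anti (List.nil_suffix (l := w))
    (R.mem_cell.2 fun s => left_mem_Icc.2 (R.lower_lt_upper w s).le)) s).1

theorem exists_enum_isMaximal (h : {w | R.IsMaximal V w}.Infinite) :
    ∃ e : ℕ → List Bool, Function.Injective e ∧ range e = {w | R.IsMaximal V w} := by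
  have := h.to_subtype
  obtain ⟨e⟩ : Nonempty (ℕ ≃ {w | R.IsMaximal V w}) := nonempty_equiv_of_countable
  exact ⟨_, Subtype.val_injective.comp e.injective, by simp [range_comp]⟩

theorem compl_union_range_mem_codiscreteWithin [Finite κ] (hV : ∀ i, IsOpen (V i))
    {Z : Set (κ → ℝ)} (hZ : Zᶜ ∈ codiscreteWithin (⋃ i, V i)) {e : ℕ → List Bool}
    (he : Function.Injective e) (hmax : ∀ n, R.IsMaximal V (e n)) {x : ℕ → κ → ℝ}
    (hx : ∀ n, x n ∈ R.cell (e n)) :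
    (Z ∪ range x)ᶜ ∈ codiscreteWithin (⋃ i, V i) := by
  rw [compl_union]
  refine inter_mem hZ (codiscreteWithin_iff_locallyFiniteComplementWithin.2 fun p hp => ?_)
  obtain ⟨N, hN, hfin⟩ := exists_nhds_finite_isMaximal (R := R) hV hp
  refine ⟨N, hN, ((hfin.preimage he.injOn).image x).subset ?_⟩
  rintro y ⟨hyN, -, hy⟩
  obtain ⟨n, rfl⟩ := not_not.1 hy
  exact ⟨n, ⟨hmax n, _, hx n, hyN⟩, rfl⟩

theorem exists_isHalfSpaceBoxTiling [Fintype κ] {s₀ : κ} (ha : a s₀ = 0)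
    (h0 : 0 ∉ range R.cutPoint) (hV : ∀ i, IsOpen (V i))
    (hroot : (⋃ i, V i) ∩ {p | 0 ≤ p s₀} = (⋃ i, V i) ∩ R.cell [])
    (hne : ((⋃ i, V i) ∩ {p | 0 ≤ p s₀}).Nonempty) {Z : Set (κ → ℝ)}
    (hZ : Zᶜ ∈ codiscreteWithin (⋃ i, V i)) (hZR : ∀ z ∈ Z, ∀ s, z s ∉ range R.cutPoint) :
    ∃ G l u, Z ⊆ G ∧ IsHalfSpaceBoxTiling s₀ V G l u := by
  obtain ⟨e, he, hrange⟩ := exists_enum_isMaximal (infinite_isMaximal (R := R) hV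
    (hroot ▸ not_isCompact_inter_setOf_le (isOpen_iUnion hV) hne))
  have hmax : ∀ n, R.IsMaximal V (e n) := fun n => hrange.subset (mem_range_self n)
  choose x hx hgen hlower using fun n => R.exists_mem_cell_notMem_range_cutPoint (e n)
  have hG : ∀ y ∈ Z ∪ range x, ∀ s, y s ∉ range R.cutPoint := by
    rintro y (hy | ⟨n, rfl⟩)
    exacts [hZR y hy, hgen n]
  refine ⟨Z ∪ range x, fun n => R.lower (e n), fun n => R.upper (e n), subset_union_left, {
    nonneg := fun n => ha ▸ R.le_lower (e n) s₀
    exists_subset := fun n => (hmax n).1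
    exists_nhds_finite := fun p hp => ?_
    covers := fun p hp hp0 => ?_
    card_le := fun p T hT => ?_
    card_le_of_eq_zero := fun p T hT => ?_
    codiscrete := compl_union_range_mem_codiscreteWithin hV hZ he hmax hx
    exists_mem := fun n => ⟨x n, Or.inr (mem_range_self n), hx n, fun hn =>
      (hlower n s₀ (hn ▸ h0)).trans hn⟩
    eq_of_mem := fun y hy m n hm hn =>
      he ((hmax m).eq_of_mem_cell (hmax n) (hG y hy) hm hn) }⟩
  · obtain ⟨N, hN, hfin⟩ := exists_nhds_finite_isMaximal (R := R) hV hp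
    exact ⟨N, hN, (hfin.preimage he.injOn).subset fun n hn => ⟨hmax n, hn⟩⟩
  · rw [inter_comm] at hroot
    obtain ⟨w, hw, hpw⟩ := mem_iUnion₂.1 ((biUnion_cell_isMaximal hV).ge
      (hroot.subset ⟨hp0, hp⟩))
    obtain ⟨n, rfl⟩ := hrange.ge hw
    exact ⟨n, hpw⟩
  · classical
    rw [← Finset.card_image_of_injective T he]
    refine (card_le_of_isMaximal (V := V) (R := R) (p := p) ?_).trans
      (Nat.add_le_add_right (Finset.card_le_univ _) 1)
    exact Finset.forall_mem_image.2 fun n hn => ⟨hmax n, hT n hn⟩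
  · rw [← Finset.card_image_of_injective T he]
    refine card_le_card_of_isMaximal_of_lower_eq h0 (V := V) (p := p) (s := s₀) ?_
    exact Finset.forall_mem_image.2 fun n hn => ⟨hmax n, hT n hn⟩

end BoxSubdivision

theorem exists_isHalfSpaceBoxCovering {κ : Type*} [Fintype κ] {s₀ : κ} {ι : Type*}
    {V : ι → Set (κ → ℝ)} (hV : ∀ i, IsOpen (V i)) {c : ℝ} (hc : 0 < c)
    (hbound : ∀ p ∈ ⋃ i, V i, ∀ s, |p s| ≤ c) (hne : ((⋃ i, V i) ∩ {p | 0 ≤ p s₀}).Nonempty)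
    {Z : Set (κ → ℝ)} (hZV : Z ⊆ ⋃ i, V i) (hZ : Zᶜ ∈ codiscreteWithin (⋃ i, V i)) :
    ∃ I, IsHalfSpaceBoxCovering s₀ V Z I := by
  classical
  have : Nonempty κ := ⟨s₀⟩
  have hZc : Z.Countable := (HereditarilyLindelofSpace.isLindelof Z).countable_of_isDiscrete
    (inter_eq_left.2 hZV ▸ isDiscrete_of_codiscreteWithin hZ)
  have hab : ∀ s, Function.update (fun _ => -c) s₀ 0 s < c := fun s => by
    rcases eq_or_ne s s₀ with rfl | hs
    · simpa
    · simpa [hs] using neg_lt_self hc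
  obtain ⟨R, hR⟩ := exists_boxSubdivision_cutPoint_notMem
    (A := {0} ∪ ⋃ s, (fun p => p s) '' Z) hab
    ((countable_singleton 0).union (countable_iUnion fun s => hZc.image _))
  have hroot : (⋃ i, V i) ∩ {p | 0 ≤ p s₀} = (⋃ i, V i) ∩ R.cell [] := by
    ext p
    refine and_congr_right fun hp => ⟨fun hp0 => R.mem_cell.2 fun s => ?_, fun h => ?_⟩
    · have hps := abs_le.1 (hbound p hp s)
      refine ⟨?_, hps.2⟩
      rcases eq_or_ne s s₀ with rfl | hs
      · simpa [BoxSubdivision.lower, BoxSubdivision.edge] using hp0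
      · simpa [BoxSubdivision.lower, BoxSubdivision.edge, hs] using hps.1
    · simpa [BoxSubdivision.lower, BoxSubdivision.edge] using (R.mem_cell.1 h s₀).1
  obtain ⟨G, l, u, hZG, h⟩ := R.exists_isHalfSpaceBoxTiling (s₀ := s₀) (by simp)
    (fun ⟨u, hu⟩ => hR u (Or.inl hu)) hV hroot hne hZ fun z hz s ⟨u, hu⟩ =>
      hR u (Or.inr (mem_iUnion.2 ⟨s, z, hz, hu.symm⟩))
  obtain ⟨I, hI⟩ := h.exists_isHalfSpaceBoxCovering hV
  exact ⟨I, { hI with eq_of_mem := fun z hz => hI.eq_of_mem z (hZG hz) }⟩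

/-! ### Order-convex sets in a chain -/

section OrdConnected

variable {α : Type*} [LinearOrder α]

theorem mem_uIcc_or_mem_uIcc_or_mem_uIcc (x y z : α) :
    x ∈ [[y, z]] ∨ y ∈ [[x, z]] ∨ z ∈ [[x, y]] := by
  simp only [mem_uIcc]
  grind

theorem nonempty_inter_inter_of_ordConnected {s t r : Set α} (hs : s.OrdConnected)
    (ht : t.OrdConnected) (hr : r.OrdConnected) (hst : (s ∩ t).Nonempty) (hsr : (s ∩ r).Nonempty)
    (htr : (t ∩ r).Nonempty) : (s ∩ t ∩ r).Nonempty := by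
  obtain ⟨x, hxs, hxt⟩ := hst
  obtain ⟨y, hys, hyr⟩ := hsr
  obtain ⟨z, hzt, hzr⟩ := htr
  rcases mem_uIcc_or_mem_uIcc_or_mem_uIcc x y z with h | h | h
  · exact ⟨x, ⟨hxs, hxt⟩, hr.uIcc_subset hyr hzr h⟩
  · exact ⟨y, ⟨hys, ht.uIcc_subset hxt hzt h⟩, hyr⟩
  · exact ⟨z, ⟨hs.uIcc_subset hxs hys h, hzt⟩, hzr⟩

theorem subset_of_ordConnected_of_mem_uIcc {s t : Set α} (hs : s.OrdConnected)
    (ht : t.OrdConnected) {x y z : α} (hx : x ∈ s) (hz : z ∈ s) (hxt : x ∉ t) (hzt : z ∉ t)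
    (hy : y ∈ t) (hxyz : y ∈ [[x, z]]) : t ⊆ s := by
  wlog hxz : x ≤ z generalizing x z
  · exact this hz hx hzt hxt (uIcc_comm x z ▸ hxyz) (le_of_not_ge hxz)
  rw [uIcc_of_le hxz] at hxyz
  exact fun w hw => hs.out hx hz ⟨le_of_not_ge fun h => hxt (ht.out hw hy ⟨h, hxyz.1⟩),
    le_of_not_ge fun h => hzt (ht.out hy hw ⟨hxyz.2, h⟩)⟩

theorem subset_or_subset_or_subset_of_ordConnected {s t₁ t₂ t₃ : Set α} (hs : s.OrdConnected)
    (h₁ : t₁.OrdConnected) (h₂ : t₂.OrdConnected) (h₃ : t₃.OrdConnected)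
    (hst₁ : (s ∩ t₁).Nonempty) (hst₂ : (s ∩ t₂).Nonempty) (hst₃ : (s ∩ t₃).Nonempty)
    (h₁₂ : Disjoint t₁ t₂) (h₁₃ : Disjoint t₁ t₃) (h₂₃ : Disjoint t₂ t₃) :
    t₁ ⊆ s ∨ t₂ ⊆ s ∨ t₃ ⊆ s := by
  obtain ⟨x, hxs, hx⟩ := hst₁
  obtain ⟨y, hys, hy⟩ := hst₂
  obtain ⟨z, hzs, hz⟩ := hst₃
  refine (mem_uIcc_or_mem_uIcc_or_mem_uIcc x y z).imp (fun h => ?_)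
    (Or.imp (fun h => ?_) fun h => ?_)
  · exact subset_of_ordConnected_of_mem_uIcc hs h₁ hys hzs (h₁₂.notMem_of_mem_right hy)
      (h₁₃.notMem_of_mem_right hz) hx h
  · exact subset_of_ordConnected_of_mem_uIcc hs h₂ hxs hzs (h₁₂.notMem_of_mem_left hx)
      (h₂₃.notMem_of_mem_right hz) hy h
  · exact subset_of_ordConnected_of_mem_uIcc hs h₃ hxs hys (h₁₃.notMem_of_mem_left hx)
      (h₂₃.notMem_of_mem_left hy) hz h

end OrdConnected

/-! ### Symmetric boxes in the complex plane -/

theorem conj_image_eq_preimage (s : Set ℂ) : conj '' s = conj ⁻¹' s :=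
  congrFun (image_eq_preimage_of_inverse Complex.conj_conj Complex.conj_conj) s

theorem convex_reProdIm {s t : Set ℝ} (hs : Convex ℝ s) (ht : Convex ℝ t) : Convex ℝ (s ×ℂ t) :=
  (hs.linear_preimage Complex.reLm).inter (ht.linear_preimage Complex.imLm)

theorem simplyConnectedSpace_of_convex {E : Type*} [AddCommGroup E] [Module ℝ E]
    [TopologicalSpace E] [ContinuousAdd E] [ContinuousSMul ℝ E] {s : Set E} (hs : Convex ℝ s)
    (hne : s.Nonempty) : SimplyConnectedSpace s :=
  have := hs.contractibleSpace hne
  inferInstance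

section FoldedBox

variable {I J : Set ℝ}

/-- The points whose reflection to the closed upper half-plane lies in the rectangle `I ×ℂ J`. -/
def foldedBox (I J : Set ℝ) : Set ℂ := I ×ℂ ((|·|) ⁻¹' J)

theorem mem_foldedBox {z : ℂ} : z ∈ foldedBox I J ↔ z.re ∈ I ∧ |z.im| ∈ J := Iff.rfl

theorem foldedBox_inter (I J I' J' : Set ℝ) :
    foldedBox I J ∩ foldedBox I' J' = foldedBox (I ∩ I') (J ∩ J') := by
  ext z
  simp only [mem_foldedBox, mem_inter_iff]
  tauto

theorem isOpen_foldedBox (hI : IsOpen I) (hJ : IsOpen J) : IsOpen (foldedBox I J) :=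
  hI.reProdIm (hJ.preimage continuous_abs)

theorem conj_image_foldedBox (I J : Set ℝ) : conj '' foldedBox I J = foldedBox I J := by
  ext z
  simp [conj_image_eq_preimage, mem_foldedBox]

theorem ordConnected_preimage_abs (hJ : J.OrdConnected) (h0 : 0 ∈ J) :
    ((|·|) ⁻¹' J : Set ℝ).OrdConnected :=
  ⟨fun a ha b hb y hy => hJ.out h0 (by rcases max_choice |a| |b| with h | h <;> rwa [h])
    ⟨abs_nonneg y, abs_le_max_abs_abs hy.1 hy.2⟩⟩

theorem isBasicSet_foldedBox_of_zero_mem (hI : IsOpen I) (hJ : IsOpen J) (hI' : I.OrdConnected)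
    (hJ' : J.OrdConnected) (h0 : 0 ∈ J) (hne : (foldedBox I J).Nonempty) :
    IsBasicSet (foldedBox I J) := by
  have hconv : Convex ℝ (foldedBox I J) :=
    convex_reProdIm hI'.convex (ordConnected_preimage_abs hJ' h0).convex
  obtain ⟨z, hz, -⟩ := id hne
  exact ⟨isOpen_foldedBox hI hJ, conj_image_foldedBox I J, Or.inl
    ⟨⟨z.re, ⟨hz, by simpa using h0⟩, Complex.ofReal_im _⟩, hne, hconv.isConnected hne,
      simplyConnectedSpace_of_convex hconv hne⟩⟩

theorem foldedBox_eq_union_conj_image (h0 : J ⊆ Ioi 0) :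
    foldedBox I J = I ×ℂ J ∪ conj '' (I ×ℂ J) := by
  ext z
  simp only [conj_image_eq_preimage, mem_foldedBox, mem_union, mem_preimage, Complex.mem_reProdIm,
    Complex.conj_re, Complex.conj_im, ← and_or_left]
  refine and_congr_right fun _ => ⟨fun h => ?_, ?_⟩
  · rcases abs_choice z.im with h' | h'
    exacts [Or.inl (h' ▸ h), Or.inr (h' ▸ h)]
  rintro (h | h)
  · rwa [abs_of_pos (h0 h)]
  · rwa [← abs_neg, abs_of_pos (h0 h)]

theorem isBasicSet_foldedBox_of_subset_Ioi (hI : IsOpen I) (hJ : IsOpen J) (hI' : I.OrdConnected)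
    (hJ' : J.OrdConnected) (h0 : J ⊆ Ioi 0) (hne : (foldedBox I J).Nonempty) :
    IsBasicSet (foldedBox I J) := by
  have hconv : Convex ℝ (I ×ℂ J) := convex_reProdIm hI'.convex hJ'.convex
  obtain ⟨z, hzI, hzJ⟩ := hne
  have hne : (I ×ℂ J).Nonempty := ⟨⟨z.re, |z.im|⟩, hzI, hzJ⟩
  exact ⟨isOpen_foldedBox hI hJ, conj_image_foldedBox I J, Or.inr
    ⟨fun x hx => abs_pos.1 (h0 hx.2), I ×ℂ J, hne, hI.reProdIm hJ, hconv.isConnected hne,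
      simplyConnectedSpace_of_convex hconv hne, fun w hw => h0 hw.2,
      foldedBox_eq_union_conj_image h0⟩⟩

/-- The symmetric open boxes, stable under intersection, whose nonempty members are basic: no
`foldedBox I J` in this class reaches the real axis without crossing it. -/
def IsFoldedBox (B : Set ℂ) : Prop :=
  ∃ I J, IsOpen I ∧ IsOpen J ∧ I.OrdConnected ∧ J.OrdConnected ∧ (0 ∈ J ∨ J ⊆ Ioi 0) ∧
    B = foldedBox I J

theorem IsFoldedBox.inter {B C : Set ℂ} (hB : IsFoldedBox B) (hC : IsFoldedBox C) :
    IsFoldedBox (B ∩ C) := by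
  obtain ⟨I, J, hI, hJ, hI', hJ', h0, rfl⟩ := hB
  obtain ⟨K, L, hK, hL, hK', hL', h0', rfl⟩ := hC
  refine ⟨I ∩ K, J ∩ L, hI.inter hK, hJ.inter hL, hI'.inter hK', hJ'.inter hL', ?_,
    foldedBox_inter I J K L⟩
  rcases h0 with h0 | h0
  · exact h0'.imp (⟨h0, ·⟩) inter_subset_right.trans
  · exact Or.inr (inter_subset_left.trans h0)

theorem IsFoldedBox.isBasicSet {B : Set ℂ} (hB : IsFoldedBox B) (hne : B.Nonempty) :
    IsBasicSet B := by
  obtain ⟨I, J, hI, hJ, hI', hJ', h0 | h0, rfl⟩ := hB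
  · exact isBasicSet_foldedBox_of_zero_mem hI hJ hI' hJ' h0 hne
  · exact isBasicSet_foldedBox_of_subset_Ioi hI hJ hI' hJ' h0 hne

theorem IsFoldedBox.eq_empty_or_isBasicSet {B : Set ℂ} (hB : IsFoldedBox B) :
    B = ∅ ∨ IsBasicSet B :=
  B.eq_empty_or_nonempty.imp_right hB.isBasicSet

end FoldedBox

section ArctanCoord

theorem isOpenEmbedding_arctan : Topology.IsOpenEmbedding Real.arctan :=
  isOpen_Ioo.isOpenEmbedding_subtypeVal.comp Real.tanOrderIso.symm.toHomeomorph.isOpenEmbedding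

/-- The embedding of the complex plane onto a bounded open square, by `Real.arctan` on both
coordinates. -/
noncomputable def arctanCoord (z : ℂ) : Fin 2 → ℝ := ![Real.arctan z.re, Real.arctan z.im]

theorem isOpenEmbedding_arctanCoord : Topology.IsOpenEmbedding arctanCoord :=
  (Homeomorph.finTwoArrow (X := ℝ)).symm.isOpenEmbedding.comp
    ((isOpenEmbedding_arctan.prodMap isOpenEmbedding_arctan).comp
      Complex.equivRealProdCLM.toHomeomorph.isOpenEmbedding)

theorem abs_arctan_le_two (x : ℝ) : |Real.arctan x| ≤ 2 :=
  abs_le.2 ⟨by linarith [Real.neg_pi_div_two_lt_arctan x, Real.pi_lt_four],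
    by linarith [Real.arctan_lt_pi_div_two x, Real.pi_lt_four]⟩

theorem abs_arctanCoord_le_two (z : ℂ) : ∀ s, |arctanCoord z s| ≤ 2 :=
  Fin.forall_fin_two.2 ⟨abs_arctan_le_two _, abs_arctan_le_two _⟩

/-- The coordinates `arctanCoord` of the reflection of `z` to the closed upper half-plane. -/
noncomputable def foldCoord (z : ℂ) : Fin 2 → ℝ := arctanCoord ⟨z.re, |z.im|⟩

theorem foldCoord_eq_or (z : ℂ) :
    foldCoord z = arctanCoord z ∨ foldCoord z = arctanCoord (conj z) :=
  (abs_choice z.im).imp (by simp [foldCoord, ·]) (by simp [foldCoord, arctanCoord, ·])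

theorem foldCoord_one_nonneg (z : ℂ) : 0 ≤ foldCoord z 1 := Real.arctan_nonneg.2 (abs_nonneg z.im)

theorem foldCoord_mem_arctanCoord_image {s : Set ℂ} (hs : conj '' s = s) {z : ℂ} :
    foldCoord z ∈ arctanCoord '' s ↔ z ∈ s := by
  rcases foldCoord_eq_or z with h | h
  · rw [h, isOpenEmbedding_arctanCoord.injective.mem_set_image]
  · rw [h, isOpenEmbedding_arctanCoord.injective.mem_set_image, ← mem_preimage,
      ← conj_image_eq_preimage, hs]

theorem foldCoord_eq_arctanCoord {z : ℂ} (hz : 0 ≤ arctanCoord z 1) :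
    foldCoord z = arctanCoord z := by
  simp [foldCoord, abs_of_nonneg (Real.arctan_nonneg.1 hz)]

theorem preimage_foldCoord_pi (I : Fin 2 → Set ℝ) :
    foldCoord ⁻¹' univ.pi I = foldedBox (Real.arctan ⁻¹' I 0) (Real.arctan ⁻¹' I 1) := by
  ext z
  simp [foldCoord, arctanCoord, mem_foldedBox]

theorem compl_image_foldCoord_mem_codiscreteWithin {D Z : Set ℂ} (hD : conj '' D = D)
    (hZ : Zᶜ ∈ codiscreteWithin D) :
    (foldCoord '' Z)ᶜ ∈ codiscreteWithin (arctanCoord '' D) := by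
  have hemb := isOpenEmbedding_arctanCoord.isEmbedding
  have hconj : arctanCoord '' (conj '' Zᶜ) ∈ codiscreteWithin (arctanCoord '' D) := by
    rw [hemb.image_mem_codiscreteWithin, ← hD]
    exact Complex.conjCLE.toHomeomorph.isEmbedding.image_mem_codiscreteWithin.2 hZ
  filter_upwards [hemb.image_mem_codiscreteWithin.2 hZ, hconj]
  rintro _ ⟨w, hw, rfl⟩ ⟨_, ⟨v, hv, rfl⟩, hvw⟩ ⟨z, hz, hzw⟩
  rcases foldCoord_eq_or z with h | h
  · exact hw (hemb.injective (h.symm.trans hzw) ▸ hz)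
  · have := hemb.injective (hvw.trans (hzw.symm.trans h))
    exact hv ((starRingEnd ℂ).injective this ▸ hz)

end ArctanCoord

/-! ### Cartan coverings -/

namespace IsHalfSpaceBoxCovering

section FinTwo

variable {ι : Type*} {V : ι → Set (Fin 2 → ℝ)} {Z : Set (Fin 2 → ℝ)} {I : ℕ → Fin 2 → Set ℝ}

theorem disjoint_of_nonempty_inter (h : IsHalfSpaceBoxCovering 1 V Z I) {n n₁ n₂ : ℕ}
    (h₁₂ : n₁ ≠ n₂) (hn₁ : n₁ ≠ n) (hn₂ : n₂ ≠ n) (hn : 0 ∈ I n 1) (h₁ : 0 ∈ I n₁ 1)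
    (h₂ : 0 ∈ I n₂ 1) (hI₁ : (I n 0 ∩ I n₁ 0).Nonempty) (hI₂ : (I n 0 ∩ I n₂ 0).Nonempty) :
    Disjoint (I n₁ 0) (I n₂ 0) := by
  refine not_not.1 fun hdisj => ?_
  obtain ⟨x, ⟨hx, hx₁⟩, hx₂⟩ := nonempty_inter_inter_of_ordConnected (h.ordConnected n 0)
    (h.ordConnected n₁ 0) (h.ordConnected n₂ 0) hI₁ hI₂ (not_disjoint_iff_nonempty_inter.1 hdisj)
  have hcard := h.card_le_of_zero_mem ![x, 0] {n, n₁, n₂} (by simp [*])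
  rw [Finset.card_eq_three.2 ⟨n, n₁, n₂, hn₁.symm, hn₂.symm, h₁₂, rfl⟩] at hcard
  simp at hcard

theorem not_nonempty_inter_three (h : IsHalfSpaceBoxCovering 1 V Z I) {n n₁ n₂ n₃ : ℕ}
    (h₁₂ : n₁ ≠ n₂) (h₁₃ : n₁ ≠ n₃) (h₂₃ : n₂ ≠ n₃) (hn₁ : n₁ ≠ n) (hn₂ : n₂ ≠ n)
    (hn₃ : n₃ ≠ n) (hn : 0 ∈ I n 1) (h₁ : 0 ∈ I n₁ 1) (h₂ : 0 ∈ I n₂ 1) (h₃ : 0 ∈ I n₃ 1) :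
    ¬((I n 0 ∩ I n₁ 0).Nonempty ∧ (I n 0 ∩ I n₂ 0).Nonempty ∧ (I n 0 ∩ I n₃ 0).Nonempty) := by
  rintro ⟨hI₁, hI₂, hI₃⟩
  have hnot : ∀ {m}, m ≠ n → 0 ∈ I m 1 → ¬I m 0 ⊆ I n 0 := fun hmn hm hsub =>
    hmn (h.eq_of_subset _ n hm hn (Fin.forall_fin_two.2 ⟨fun _ => hsub, (absurd rfl ·)⟩))
  rcases subset_or_subset_or_subset_of_ordConnected (h.ordConnected n 0) (h.ordConnected n₁ 0)
    (h.ordConnected n₂ 0) (h.ordConnected n₃ 0) hI₁ hI₂ hI₃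
    (h.disjoint_of_nonempty_inter h₁₂ hn₁ hn₂ hn h₁ h₂ hI₁ hI₂)
    (h.disjoint_of_nonempty_inter h₁₃ hn₁ hn₃ hn h₁ h₃ hI₁ hI₃)
    (h.disjoint_of_nonempty_inter h₂₃ hn₂ hn₃ hn h₂ h₃ hI₂ hI₃) with hs | hs | hs
  exacts [hnot hn₁ h₁ hs, hnot hn₂ h₂ hs, hnot hn₃ h₃ hs]

theorem isFoldedBox (h : IsHalfSpaceBoxCovering 1 V Z I) (n : ℕ) :
    IsFoldedBox (foldCoord ⁻¹' univ.pi (I n)) :=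
  ⟨_, _, (h.isOpen n 0).preimage Real.continuous_arctan,
    (h.isOpen n 1).preimage Real.continuous_arctan,
    (h.ordConnected n 0).preimage_mono Real.arctan_mono,
    (h.ordConnected n 1).preimage_mono Real.arctan_mono,
    (h.zero_mem_or_subset n).imp (by simp) fun hpos x hx => Real.arctan_pos.1 (hpos hx),
    preimage_foldCoord_pi (I n)⟩

theorem inter_inter_inter_eq_empty (h : IsHalfSpaceBoxCovering 1 V Z I) {n₁ n₂ n₃ n₄ : ℕ}
    (h₁₂ : n₁ ≠ n₂) (h₁₃ : n₁ ≠ n₃) (h₁₄ : n₁ ≠ n₄) (h₂₃ : n₂ ≠ n₃) (h₂₄ : n₂ ≠ n₄)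
    (h₃₄ : n₃ ≠ n₄) :
    univ.pi (I n₁) ∩ univ.pi (I n₂) ∩ univ.pi (I n₃) ∩ univ.pi (I n₄) = ∅ := by
  refine eq_empty_of_forall_notMem fun p ⟨⟨⟨hp₁, hp₂⟩, hp₃⟩, hp₄⟩ => ?_
  have hcard := h.card_le p {n₁, n₂, n₃, n₄} (by
    simp only [Finset.forall_mem_insert, Finset.mem_singleton, forall_eq]
    exact ⟨hp₁, hp₂, hp₃, hp₄⟩)
  simp [*] at hcard

theorem nonempty_preimage_foldCoord {W : ι → Set ℂ}
    (h : IsHalfSpaceBoxCovering 1 (fun i => arctanCoord '' W i) Z I) (n : ℕ) :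
    (foldCoord ⁻¹' univ.pi (I n)).Nonempty := by
  obtain ⟨p, hp, hp0⟩ := h.exists_mem n
  obtain ⟨i, hi⟩ := h.exists_subset n
  obtain ⟨z, -, rfl⟩ := hi hp
  exact ⟨z, by rwa [mem_preimage, foldCoord_eq_arctanCoord hp0]⟩

theorem exists_preimage_foldCoord_subset {W : ι → Set ℂ} (hW : ∀ i, conj '' W i = W i)
    (h : IsHalfSpaceBoxCovering 1 (fun i => arctanCoord '' W i) Z I) (n : ℕ) :
    ∃ i, foldCoord ⁻¹' univ.pi (I n) ⊆ W i :=
  (h.exists_subset n).imp fun i hi _ hz => (foldCoord_mem_arctanCoord_image (hW i)).1 (hi hz)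

end FinTwo

end IsHalfSpaceBoxCovering

theorem zero_mem_of_exists_im_eq_zero {J : Fin 2 → Set ℝ}
    (h : ∃ x ∈ foldCoord ⁻¹' univ.pi J, x.im = 0) : 0 ∈ J 1 := by
  obtain ⟨x, hx, hx0⟩ := h
  simpa [foldCoord, arctanCoord, hx0] using hx 1 (mem_univ 1)

theorem ofReal_re_mem_preimage_foldCoord {J : Fin 2 → Set ℝ} {z : ℂ}
    (hz : z ∈ foldCoord ⁻¹' univ.pi J) (h0 : 0 ∈ J 1) : (z.re : ℂ) ∈ foldCoord ⁻¹' univ.pi J := by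
  rw [preimage_foldCoord_pi] at hz ⊢
  exact ⟨hz.1, by simpa using h0⟩

/-- `B` is a Cartan covering of `D` by basic sets, subordinated to `(U, Z)`: it refines `U`, and
distinct members have no point of `Z` in common. -/
structure IsCartanCovering (D : Set ℂ) {ι : Type*} (U : ι → Set ℂ) (Z : Set ℂ)
    (B : ℕ → Set ℂ) : Prop where
  isBasicSet : ∀ n, IsBasicSet (B n)
  exists_subset : ∀ n, ∃ i, B n ⊆ D ∩ U i
  iUnion_eq : ⋃ n, B n = D
  inter : ∀ n₁ n₂, B n₁ ∩ B n₂ = ∅ ∨ IsBasicSet (B n₁ ∩ B n₂)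
  inter_inter : ∀ n₁ n₂ n₃, B n₁ ∩ B n₂ ∩ B n₃ = ∅ ∨ IsBasicSet (B n₁ ∩ B n₂ ∩ B n₃)
  exists_mem_inter : ∀ n₁ n₂, (∃ x ∈ B n₁, x.im = 0) → (∃ x ∈ B n₂, x.im = 0) →
    (B n₁ ∩ B n₂).Nonempty → ∃ x ∈ B n₁ ∩ B n₂, x.im = 0
  not_three_neighbors : ∀ n, (∃ x ∈ B n, x.im = 0) →
    ∀ n₁ n₂ n₃, n₁ ≠ n₂ → n₁ ≠ n₃ → n₂ ≠ n₃ → n₁ ≠ n → n₂ ≠ n → n₃ ≠ n →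
      ¬((∃ x ∈ B n₁, x.im = 0) ∧ (B n ∩ B n₁).Nonempty ∧
        (∃ x ∈ B n₂, x.im = 0) ∧ (B n ∩ B n₂).Nonempty ∧
        (∃ x ∈ B n₃, x.im = 0) ∧ (B n ∩ B n₃).Nonempty)
  neighbors_inter_eq_empty : ∀ n, (∃ x ∈ B n, x.im = 0) →
    ∀ n₁ n₂, n₁ ≠ n₂ → n₁ ≠ n → n₂ ≠ n →
      (∃ x ∈ B n₁, x.im = 0) → (B n ∩ B n₁).Nonempty →
      (∃ x ∈ B n₂, x.im = 0) → (B n ∩ B n₂).Nonempty → B n₁ ∩ B n₂ = ∅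
  inter_inter_inter_eq_empty : ∀ n₁ n₂ n₃ n₄, n₁ ≠ n₂ → n₁ ≠ n₃ → n₁ ≠ n₄ → n₂ ≠ n₃ → n₂ ≠ n₄ →
    n₃ ≠ n₄ → B n₁ ∩ B n₂ ∩ B n₃ ∩ B n₄ = ∅
  inter_inter_eq_empty : ∀ n₁ n₂, n₁ ≠ n₂ → B n₁ ∩ B n₂ ∩ Z = ∅

namespace IsHalfSpaceBoxCovering

variable {D : Set ℂ} {ι : Type*} {U : ι → Set ℂ} {Z : Set ℂ} {I : ℕ → Fin 2 → Set ℝ}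

theorem isCartanCovering (hsym : conj '' D = D) (hUsym : ∀ i, conj '' U i = U i)
    (hU : D ⊆ ⋃ i, U i) (h : IsHalfSpaceBoxCovering 1 (fun i => arctanCoord '' (D ∩ U i))
      (foldCoord '' (Z ∩ D)) I) :
    IsCartanCovering D U Z fun n => foldCoord ⁻¹' univ.pi (I n) := by
  have hsub := h.exists_preimage_foldCoord_subset fun i => by
    rw [image_inter (starRingEnd ℂ).injective, hsym, hUsym]
  have hsubD : ∀ n, foldCoord ⁻¹' univ.pi (I n) ⊆ D := fun n =>
    (hsub n).elim fun i hi => hi.trans inter_subset_left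
  have hI : ∀ {m n}, (foldCoord ⁻¹' univ.pi (I m) ∩ foldCoord ⁻¹' univ.pi (I n)).Nonempty →
      (I m 0 ∩ I n 0).Nonempty := fun ⟨z, hm, hn⟩ => ⟨_, hm 0 (mem_univ 0), hn 0 (mem_univ 0)⟩
  exact {
    isBasicSet := fun n => (h.isFoldedBox n).isBasicSet (h.nonempty_preimage_foldCoord n)
    exists_subset := hsub
    iUnion_eq := by
      refine (iUnion_subset hsubD).antisymm fun z hz => mem_iUnion.2 ?_
      refine h.covers _ ?_ (foldCoord_one_nonneg z)
      rwa [← image_iUnion, ← inter_iUnion, inter_eq_left.2 hU,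
        foldCoord_mem_arctanCoord_image hsym]
    inter := fun n₁ n₂ => ((h.isFoldedBox n₁).inter (h.isFoldedBox n₂)).eq_empty_or_isBasicSet
    inter_inter := fun n₁ n₂ n₃ => (((h.isFoldedBox n₁).inter (h.isFoldedBox n₂)).inter
      (h.isFoldedBox n₃)).eq_empty_or_isBasicSet
    exists_mem_inter := fun n₁ n₂ h₁ h₂ ⟨z, hz₁, hz₂⟩ =>
      ⟨z.re, ⟨ofReal_re_mem_preimage_foldCoord hz₁ (zero_mem_of_exists_im_eq_zero h₁),
        ofReal_re_mem_preimage_foldCoord hz₂ (zero_mem_of_exists_im_eq_zero h₂)⟩,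
        Complex.ofReal_im _⟩
    not_three_neighbors := fun n hn n₁ n₂ n₃ h₁₂ h₁₃ h₂₃ hn₁ hn₂ hn₃ ⟨h₁, hI₁, h₂, hI₂, h₃, hI₃⟩ =>
      h.not_nonempty_inter_three h₁₂ h₁₃ h₂₃ hn₁ hn₂ hn₃ (zero_mem_of_exists_im_eq_zero hn)
        (zero_mem_of_exists_im_eq_zero h₁) (zero_mem_of_exists_im_eq_zero h₂)
        (zero_mem_of_exists_im_eq_zero h₃) ⟨hI hI₁, hI hI₂, hI hI₃⟩
    neighbors_inter_eq_empty := fun n hn n₁ n₂ h₁₂ hn₁ hn₂ h₁ hI₁ h₂ hI₂ =>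
      disjoint_iff_inter_eq_empty.1 <| Disjoint.preimage _ <| disjoint_univ_pi.2
        ⟨0, h.disjoint_of_nonempty_inter h₁₂ hn₁ hn₂ (zero_mem_of_exists_im_eq_zero hn)
          (zero_mem_of_exists_im_eq_zero h₁) (zero_mem_of_exists_im_eq_zero h₂) (hI hI₁) (hI hI₂)⟩
    inter_inter_inter_eq_empty := fun n₁ n₂ n₃ n₄ h₁₂ h₁₃ h₁₄ h₂₃ h₂₄ h₃₄ => by
      simp only [← preimage_inter]
      rw [h.inter_inter_inter_eq_empty h₁₂ h₁₃ h₁₄ h₂₃ h₂₄ h₃₄, preimage_empty]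
    inter_inter_eq_empty := fun n₁ n₂ h₁₂ => eq_empty_of_forall_notMem fun z ⟨⟨hz₁, hz₂⟩, hzZ⟩ =>
      h₁₂ (h.eq_of_mem _ ⟨z, ⟨hzZ, hsubD n₁ hz₁⟩, rfl⟩ n₁ n₂ hz₁ hz₂) }

end IsHalfSpaceBoxCovering

theorem compl_mem_codiscreteWithin_of_isClosed_preimage {X : Type*} [TopologicalSpace X]
    {D Z : Set X} (hd : DiscreteTopology Z) (hc : IsClosed (Subtype.val ⁻¹' Z : Set D)) :
    Zᶜ ∈ codiscreteWithin D := by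
  have hcod : (Subtype.val ⁻¹' Z : Set D)ᶜ ∈ codiscrete D := compl_mem_codiscrete_iff.2
    ⟨hc, (isDiscrete_iff_discreteTopology.2 hd).preimage continuous_subtype_val.continuousOn
      Subtype.val_injective⟩
  refine mem_of_superset (mem_codiscrete_subtype_iff_mem_codiscreteWithin.1 hcod) ?_
  rintro _ ⟨x, hx, rfl⟩
  exact hx

theorem exists_cartan_covering_general {D : Set ℂ} (hne : D.Nonempty) (hopen : IsOpen D)
    (hsym : conj '' D = D) {ι : Type*} {U : ι → Set ℂ} (hUopen : ∀ i, IsOpen (U i))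
    (hUsym : ∀ i, conj '' U i = U i) (hUcover : D ⊆ ⋃ i, U i) {Z : Set ℂ}
    (hZ : Zᶜ ∈ codiscreteWithin D) : ∃ B, IsCartanCovering D U Z B := by
  have hV : ⋃ i, arctanCoord '' (D ∩ U i) = arctanCoord '' D := by
    rw [← image_iUnion, ← inter_iUnion, inter_eq_left.2 hUcover]
  have hfold : ∀ z ∈ D, foldCoord z ∈ ⋃ i, arctanCoord '' (D ∩ U i) := fun z hz => by
    rwa [hV, foldCoord_mem_arctanCoord_image hsym]
  obtain ⟨z, hz⟩ := hne
  obtain ⟨I, hI⟩ := exists_isHalfSpaceBoxCovering (s₀ := 1) (Z := foldCoord '' (Z ∩ D))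
    (fun i => isOpenEmbedding_arctanCoord.isOpenMap _ (hopen.inter (hUopen i))) two_pos
    (hV ▸ forall_mem_image.2 fun z _ => abs_arctanCoord_le_two z)
    ⟨_, hfold z hz, foldCoord_one_nonneg z⟩ (image_subset_iff.2 fun z hz => hfold z hz.2)
    (hV ▸ mem_of_superset (compl_image_foldCoord_mem_codiscreteWithin hsym hZ)
      (compl_subset_compl.2 (image_mono inter_subset_left)))
  exact ⟨_, hI.isCartanCovering hsym hUsym hUcover⟩

/-- Existence of Cartan coverings (slicewise form): given a nonempty symmetric open
set `D ⊆ ℂ`, a locally finite symmetric open covering `U` of `D` and a symmetric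
discrete closed subset `Z` of `D`, there is a countable covering of `D` by basic open
sets, subordinated to `U`, whose double and triple intersections are empty or basic,
whose restriction to the real axis forms a chain of order two, with no quadruple
intersections, and whose double intersections avoid `Z`. -/
theorem exists_cartan_covering (D : Set ℂ)
    (hne : D.Nonempty) (hopen : IsOpen D) (hsym : (starRingEnd ℂ) '' D = D)
    {ι : Type} (U : ι → Set ℂ)
    (hUopen : ∀ i, IsOpen (U i)) (hUsym : ∀ i, (starRingEnd ℂ) '' U i = U i)
    (hUcover : D ⊆ ⋃ i, U i) (hUlf : LocallyFinite U)
    (Z : Set ℂ) (hZD : Z ⊆ D) (hZsym : (starRingEnd ℂ) '' Z = Z)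
    (hZdiscrete : DiscreteTopology Z)
    (hZclosed : IsClosed (Subtype.val ⁻¹' Z : Set D)) :
    ∃ B : ℕ → Set ℂ,
      (∀ n, IsBasicSet (B n)) ∧
      (∀ n, B n ⊆ D) ∧
      (⋃ n, B n) = D ∧
      -- (i) subordination
      (∀ n, ∃ i, B n ⊆ U i) ∧
      -- (ii) double and triple intersections are empty or basic
      (∀ n₁ n₂, n₁ ≠ n₂ → (B n₁ ∩ B n₂ = ∅ ∨ IsBasicSet (B n₁ ∩ B n₂))) ∧
      (∀ n₁ n₂ n₃, n₁ ≠ n₂ → n₁ ≠ n₃ → n₂ ≠ n₃ →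
        (B n₁ ∩ B n₂ ∩ B n₃ = ∅ ∨ IsBasicSet (B n₁ ∩ B n₂ ∩ B n₃))) ∧
      -- (iii) chain property along the real axis
      (∀ n₁ n₂, n₁ ≠ n₂ → (∃ x ∈ B n₁, x.im = 0) → (∃ x ∈ B n₂, x.im = 0) →
        (B n₁ ∩ B n₂).Nonempty → ∃ x ∈ B n₁ ∩ B n₂, x.im = 0) ∧
      (∀ n, (∃ x ∈ B n, x.im = 0) →
        (∀ n₁ n₂ n₃, n₁ ≠ n₂ → n₁ ≠ n₃ → n₂ ≠ n₃ → n₁ ≠ n → n₂ ≠ n → n₃ ≠ n →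
          ¬ ((∃ x ∈ B n₁, x.im = 0) ∧ (B n ∩ B n₁).Nonempty ∧
             (∃ x ∈ B n₂, x.im = 0) ∧ (B n ∩ B n₂).Nonempty ∧
             (∃ x ∈ B n₃, x.im = 0) ∧ (B n ∩ B n₃).Nonempty)) ∧
        (∀ n₁ n₂, n₁ ≠ n₂ → n₁ ≠ n → n₂ ≠ n →
          (∃ x ∈ B n₁, x.im = 0) → (B n ∩ B n₁).Nonempty →
          (∃ x ∈ B n₂, x.im = 0) → (B n ∩ B n₂).Nonempty →
          B n₁ ∩ B n₂ = ∅)) ∧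
      -- (iv) no quadruple intersections
      (∀ n₁ n₂ n₃ n₄, n₁ ≠ n₂ → n₁ ≠ n₃ → n₁ ≠ n₄ → n₂ ≠ n₃ → n₂ ≠ n₄ → n₃ ≠ n₄ →
        B n₁ ∩ B n₂ ∩ B n₃ ∩ B n₄ = ∅) ∧
      -- (v) double intersections avoid Z
      (∀ n₁ n₂, n₁ ≠ n₂ → B n₁ ∩ B n₂ ∩ Z = ∅) := by
  have hZ := compl_mem_codiscreteWithin_of_isClosed_preimage hZdiscrete hZclosed
  obtain ⟨B, h⟩ := exists_cartan_covering_general hne hopen hsym hUopen hUsym hUcover hZ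
  exact ⟨B, h.isBasicSet, fun n => (h.exists_subset n).elim fun _ hi => hi.trans inter_subset_left,
    h.iUnion_eq, fun n => (h.exists_subset n).imp fun _ hi => hi.trans inter_subset_right,
    fun n₁ n₂ _ => h.inter n₁ n₂, fun n₁ n₂ n₃ _ _ _ => h.inter_inter n₁ n₂ n₃,
    fun n₁ n₂ _ => h.exists_mem_inter n₁ n₂,
    fun n hn => ⟨h.not_three_neighbors n hn, h.neighbors_inter_eq_empty n hn⟩,
    h.inter_inter_inter_eq_empty, h.inter_inter_eq_empty⟩
end

section
/- Let D ⊆ ℂ be a symmetric open set, let (U_i)_{i ∈ ι} be a symmetric open covering of D, and let (n_{ijk})_{(i,j,k) ∈ ι³} be a family of integers which is alternating (it changes sign under any transposition of the indices), satisfies n_{ijk} = 0 whenever U_i ∩ U_j ∩ U_k ∩ ℝ ≠ ∅, and satisfies the cocycle identity n_{jkl} − n_{ikl} + n_{ijl} − n_{ijk} = 0 whenever U_i ∩ U_j ∩ U_k ∩ U_l ∩ ℂ⁺ ≠ ∅. Then there exist a symmetric open covering (V_a)_{a ∈ A} of D, a refinement map r : A → ι with V_a ⊆ U_{r(a)} for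 every a, and an alternating family of integers (m_{ab})_{(a,b) ∈ A²} with m_{ab} = 0 whenever V_a ∩ V_b ∩ ℝ ≠ ∅, such that n_{r(a) r(b) r(c)} = m_{bc} − m_{ac} + m_{ab} whenever V_a ∩ V_b ∩ V_c ∩ ℂ⁺ ≠ ∅. -/
open Set

open scoped Topology

/-!
The maximal dyadic squares, of side at most one, contained in a member of the covering tile the
upper half of `⋃ i, U i`, and it suffices to find a primitive of the cocycle on the nerve of this
tiling. At each point, a cochain prescribed on the pairs of neighbouring tiles extends to a
primitive on the tiles meeting there as soon as its circulation around the point has the value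
dictated by the cocycle. This is a condition only at the nodes of the tiling. The graph of the nodes
is locally finite and all its components are infinite, because every node has an adjacent one which
is higher, or equally high and further to the right. By König's lemma the required circulations can
therefore be pushed off to infinity along edges of the tiling. These edges end at nodes above the
real axis, so the primitive vanishes on pairs of tiles meeting in `ℝ`. Finally the tiles are swollen
to open sets without changing the nerve, and reflected across the real axis.
-/

section RootedForest

/-- The vertices lying above `v` in a rooted forest, including `v`. The forest is encoded by its
parent map, the roots being their own parents. -/
def descendants {V : Type*} (parent : V → V) (v : V) : Set V :=
  {u | ∃ k, parent^[k] u = v}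

variable {V : Type*} {parent : V → V}

theorem descendants_subset_parent (v : V) :
    descendants parent v ⊆ descendants parent (parent v) := by
  rintro u ⟨k, rfl⟩
  exact ⟨k + 1, Function.iterate_succ_apply' parent k u⟩

theorem descendants_subset_insert_biUnion (v : V) :
    descendants parent v ⊆ insert v (⋃ u ∈ {u | u ≠ v ∧ parent u = v}, descendants parent u) := by
  rintro u ⟨k, hk⟩
  induction k with
  | zero => exact Or.inl hk
  | succ k ih =>
    by_cases h : parent^[k] u = v
    · exact ih h
    · rw [Function.iterate_succ_apply'] at hk
      exact Or.inr (mem_biUnion ⟨h, hk⟩ ⟨k, rfl⟩)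

theorem le_of_mem_descendants {α : Type*} [Preorder α] {depth : V → α}
    (hdepth : ∀ v, depth (parent v) ≤ depth v) {u v : V} (h : u ∈ descendants parent v) :
    depth v ≤ depth u := by
  obtain ⟨k, rfl⟩ := h
  induction k with
  | zero => exact le_rfl
  | succ k ih => exact (Function.iterate_succ_apply' parent k u ▸ hdepth _).trans ih

variable {G : SimpleGraph V}

theorem exists_adj_dist_lt {u v : V} (h : G.Reachable u v) (hne : u ≠ v) :
    ∃ w, G.Adj u w ∧ G.dist w v < G.dist u v := by
  obtain ⟨p, hp⟩ := h.exists_walk_length_eq_dist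
  cases p with
  | nil => exact absurd rfl hne
  | cons hadj q => exact ⟨_, hadj, hp ▸ Nat.lt_succ_of_le (SimpleGraph.dist_le q)⟩

variable (G) in
theorem exists_spanningForest :
    ∃ (parent : V → V) (depth : V → ℕ),
      (∀ v, parent v = v ∨ G.Adj v (parent v) ∧ depth (parent v) < depth v) ∧
      ∀ v, parent v = v → {u | G.Reachable v u} ⊆ descendants parent v := by
  classical
  let root : V → V := fun v => (G.connectedComponentMk v).out
  have reachable_root (v) : G.Reachable v (root v) :=
    (SimpleGraph.ConnectedComponent.exact (Quot.out_eq _)).symm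
  have root_eq {u v} (h : G.Reachable u v) : root u = root v :=
    congrArg Quot.out (SimpleGraph.ConnectedComponent.sound h)
  choose! next adj_next dist_next using fun v => exists_adj_dist_lt (reachable_root v)
  let parent : V → V := fun v => if v = root v then v else next v
  let depth : V → ℕ := fun v => G.dist v (root v)
  have parent_eq_or (v) :
      v = root v ∧ parent v = v ∨ G.Adj v (parent v) ∧ depth (parent v) < depth v := by
    by_cases hv : v = root v
    · exact Or.inl ⟨hv, if_pos hv⟩
    · have hadj := adj_next v hv
      simp only [parent, depth, if_neg hv, ← root_eq hadj.reachable]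
      exact Or.inr ⟨hadj, dist_next v hv⟩
  refine ⟨parent, depth, fun v => (parent_eq_or v).imp_left And.right, fun v hv u huv => ?_⟩
  have root_v : v = root v := by
    rcases parent_eq_or v with h | h
    · exact h.1
    · exact absurd h.1 (hv.symm ▸ G.loopless.irrefl v)
  induction hd : depth u using Nat.strong_induction_on generalizing u with
  | _ d ih =>
    rcases parent_eq_or u with ⟨h, -⟩ | ⟨hadj, hlt⟩
    · exact ⟨0, (h.trans (root_eq huv).symm).trans root_v.symm⟩
    · obtain ⟨k, hk⟩ := ih _ (hd ▸ hlt) _ (SimpleGraph.Reachable.trans huv hadj.reachable) rfl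
      exact ⟨k + 1, hk⟩

/-- König's lemma: along the spanning forest, a vertex with infinitely many descendants points to a
child of the same kind, and any other vertex points to its parent. -/
theorem exists_wellFounded_successor (hloc : ∀ v, (G.neighborSet v).Finite)
    (hinf : ∀ v, {u | G.Reachable v u}.Infinite) :
    ∃ s : V → V, (∀ v, G.Adj v (s v)) ∧ WellFounded fun u v => s u = v := by
  obtain ⟨parent, depth, hparent, hroot⟩ := exists_spanningForest G
  have depth_parent (v) : depth (parent v) ≤ depth v :=
    (hparent v).elim (fun h => h.symm ▸ le_rfl) fun h => h.2.le
  let D := descendants parent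
  let rank : V → ℕ∞ ×ₗ ℕ := fun v => toLex ((D v).encard, depth v)
  have hstep (v) : ∃ u, G.Adj v u ∧ rank v < rank u := by
    by_cases hD : (D v).Finite
    · obtain ⟨hadj, hlt⟩ := (hparent v).resolve_left fun h => (hinf v).mono (hroot v h) hD
      have hssub : D v ⊂ D (parent v) :=
        ⟨descendants_subset_parent v, fun h => hlt.not_ge <|
          le_of_mem_descendants depth_parent (h ⟨0, rfl⟩)⟩
      exact ⟨parent v, hadj, Prod.Lex.toLex_lt_toLex.2 (Or.inl (hD.encard_lt_encard hssub))⟩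
    · have child {u} (hu : u ≠ v ∧ parent u = v) : G.Adj v u ∧ depth v < depth u := by
        obtain ⟨hne, rfl⟩ := hu
        exact ((hparent u).resolve_left hne.symm).imp_left SimpleGraph.Adj.symm
      obtain ⟨u, hu, huD⟩ : ∃ u ∈ {u | u ≠ v ∧ parent u = v}, (D u).Infinite := by
        by_contra! hfin
        have hU := Finite.biUnion ((hloc v).subset fun u hu => (child hu).1) hfin
        exact hD ((hU.insert v).subset (descendants_subset_insert_biUnion v))
      refine ⟨u, (child hu).1, Prod.Lex.toLex_lt_toLex.2 (Or.inr ⟨?_, (child hu).2⟩)⟩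
      exact (Infinite.encard_eq hD).trans huD.encard_eq.symm
  choose s hadj hrank using hstep
  exact ⟨s, hadj, Subrelation.wf (fun {u v} h => h ▸ hrank u) (InvImage.wf rank wellFounded_lt)⟩

end RootedForest

theorem exists_linearCombination_eq_of_triangular {P E R N : Type*} [Ring R] [Nontrivial R]
    [AddCommGroup N] [Module R N] (a : P → E →₀ R) (e : P → E) {r : P → P → Prop}
    (hr : WellFounded r) (hunit : ∀ p, IsUnit (a p (e p)))
    (hlater : ∀ p q, q ≠ p → a q (e p) ≠ 0 → r p q) (c : P → N) :
    ∃ w : E → N, (∀ p, Finsupp.linearCombination R w (a p) = c p) ∧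
      Function.support w ⊆ range e := by
  classical
  have he : e.Injective := fun p q hpq => by
    by_contra hne
    exact hr.asymmetric p q (hlater p q (Ne.symm hne) (hpq ▸ (hunit q).ne_zero))
      (hlater q p hne (hpq ▸ (hunit p).ne_zero))
  choose b hb using hunit
  let extend (F : P → N) : E → N := Function.extend e F 0
  have extend_pivot (F p) : extend F (e p) = F p := he.extend_apply F 0 p
  let step (p : P) (F : (q : P) → r q p → N) : N := (b p)⁻¹ • (c p -
    Finsupp.linearCombination R (extend fun q => if h : r q p then F q h else 0)
      ((a p).erase (e p)))
  let F : P → N := hr.fix step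
  have hF (p) : F p = step p fun q _ => F q := hr.fix_eq step p
  refine ⟨extend F, fun p => ?_, fun x hx => ?_⟩
  · have earlier : Finsupp.linearCombination R (extend fun q => if r q p then F q else 0)
        ((a p).erase (e p)) = Finsupp.linearCombination R (extend F) ((a p).erase (e p)) := by
      refine Finsupp.sum_congr fun x hx => ?_
      by_cases h : ∃ q, e q = x
      · obtain ⟨q, rfl⟩ := h
        rw [Finsupp.support_erase, Finset.mem_erase, Finsupp.mem_support_iff] at hx
        simp only [extend_pivot, if_pos (hlater q p (fun h => hx.1 (h ▸ rfl)) hx.2)]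
      · simp only [extend, Function.extend_apply' _ _ _ h]
    conv_lhs => rw [← Finsupp.single_add_erase (e p) (a p)]
    rw [map_add, Finsupp.linearCombination_single, extend_pivot, hF, ← hb, ← Units.smul_def]
    simp only [step, dite_eq_ite, earlier, smul_inv_smul, sub_add_cancel]
  · by_contra h
    exact hx (Function.extend_apply' _ _ _ h)

section BoundaryCycle

variable {A : Type*} (q : Fin 4 → A)

/-- The closed path `q 0, q 1, q 2, q 3, q 0` as an antisymmetric chain. -/
noncomputable def cycle : A × A →₀ ℤ :=
  ∑ i, (Finsupp.single (q i, q (i + 1)) 1 - Finsupp.single (q (i + 1), q i) 1)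

theorem linearCombination_cycle (w : A × A → ℤ) :
    Finsupp.linearCombination ℤ w (cycle q) = ∑ i, (w (q i, q (i + 1)) - w (q (i + 1), q i)) := by
  simp only [cycle, map_sum, map_sub, Finsupp.linearCombination_single, one_smul]

variable {q} {x : A × A}

theorem exists_eq_of_cycle_ne_zero (h : cycle q x ≠ 0) :
    ∃ i, s(x.1, x.2) = s(q i, q (i + 1)) := by
  contrapose! h
  classical
  refine (Finsupp.finsetSum_apply ..).trans (Finset.sum_eq_zero fun i _ => ?_)
  have hi := h i
  rw [Ne, Sym2.eq_iff, not_or] at hi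
  rw [Finsupp.sub_apply, Finsupp.single_eq_of_ne fun hx => hi.1 (Prod.ext_iff.1 hx),
    Finsupp.single_eq_of_ne fun hx => hi.2 (Prod.ext_iff.1 hx), sub_zero]

theorem cycle_apply_eq_one (hopp : ∀ i, q i ≠ q (i + 2))
    (hpair : ∀ i, q i = q (i + 1) → q (i + 2) ≠ q (i + 3)) {i : Fin 4} (hi : q i ≠ q (i + 1)) :
    cycle q (q i, q (i + 1)) = 1 := by
  classical
  simp only [cycle, Fin.sum_univ_four, Finsupp.add_apply, Finsupp.sub_apply, Finsupp.single_apply,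
    Prod.mk.injEq]
  have := hopp 0
  have := hopp 1
  have := hpair 0
  have := hpair 1
  match i with
  | 0 | 1 | 2 | 3 => grind

theorem exists_potential {d : A → A → ℤ} (hd : ∀ Q Q', d Q Q' = -d Q' Q)
    (hsum : ∑ i, d (q i) (q (i + 1)) = 0) :
    ∃ g : A → ℤ, ∀ i, d (q i) (q (i + 1)) = g (q (i + 1)) - g (q i) := by
  rw [Fin.sum_univ_four] at hsum
  let G : Fin 4 → ℤ :=
    ![0, d (q 0) (q 1), d (q 0) (q 1) + d (q 1) (q 2), -d (q 3) (q 0)]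
  have hG : G.FactorsThrough q := fun i j hij => by
    have h₀₁ := hd (q 0) (q 1)
    have h₁₂ := hd (q 1) (q 2)
    have h₂₃ := hd (q 2) (q 3)
    have h₃₀ := hd (q 3) (q 0)
    fin_cases i <;> fin_cases j <;>
      simp only [G, Fin.reduceFinMk, Fin.isValue, Fin.zero_eta, Fin.mk_one, Matrix.cons_val]
        at hij ⊢ <;>
      grind
  refine ⟨Function.extend q G 0, fun i => ?_⟩
  rw [hG.extend_apply, hG.extend_apply]
  fin_cases i
  all_goals
    simp only [G, Fin.reduceFinMk, Fin.isValue, Fin.reduceAdd, Matrix.cons_val] at hsum ⊢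
    grind

end BoundaryCycle

/-- The interval `[a, b)` for `s = true` and `(a, b]` for `s = false`: the points `x` such that
`[a, b]` contains a one-sided neighbourhood of `x`, to the right or to the left respectively. -/
def halfOpen : Bool → ℝ → ℝ → Set ℝ
  | true => Ico
  | false => Ioc

section HalfOpen

variable {s : Bool} {a b a' b' x y : ℝ}

theorem halfOpen_subset_Icc : halfOpen s a b ⊆ Icc a b := by
  cases s
  exacts [Ioc_subset_Icc_self, Ico_subset_Icc_self]

theorem halfOpen_subset_halfOpen (ha : a' ≤ a) (hb : b ≤ b') :
    halfOpen s a b ⊆ halfOpen s a' b' := by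
  cases s
  exacts [Ioc_subset_Ioc ha hb, Ico_subset_Ico ha hb]

theorem exists_mem_halfOpen (hab : a < b) (hx : x ∈ Icc a b) : ∃ s, x ∈ halfOpen s a b := by
  rcases hx.2.lt_or_eq with h | h
  · exact ⟨true, hx.1, h⟩
  · exact ⟨false, h ▸ hab, hx.2⟩

/-- If both failed, the two intervals would abut at `x`, whereas they also share `y`. -/
theorem mem_halfOpen_not_or (hyx : y ≠ x) (hy : y ∈ Icc a b) (hy' : y ∈ Icc a' b')
    (hx : x ∈ halfOpen s a b) (hx' : x ∈ halfOpen (!s) a' b') :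
    x ∈ halfOpen (!s) a b ∨ x ∈ halfOpen s a' b' := by
  rcases hyx.lt_or_gt with h | h <;> cases s
  all_goals
    simp only [halfOpen, Bool.not_false, Bool.not_true] at hx hx' ⊢
    grind

end HalfOpen

/-- A nondegenerate closed rectangle with sides parallel to the axes. -/
structure Rect where
  left : ℝ
  right : ℝ
  bot : ℝ
  top : ℝ
  left_lt_right : left < right
  bot_lt_top : bot < top

namespace Rect

/-- The points of a rectangle. -/
def box (Q : Rect) : Set ℂ := Icc Q.left Q.right ×ℂ Icc Q.bot Q.top

/-- The points of a rectangle which contains one of the quadrants at that point locally: the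
north-eastern one for `s = t = true`, the north-western one for `s = false`, `t = true`, etc. -/
def cell (Q : Rect) (s t : Bool) : Set ℂ := halfOpen s Q.left Q.right ×ℂ halfOpen t Q.bot Q.top

/-- The lower left corner of the intersection of two rectangles. -/
def lo (Q Q' : Rect) : ℂ := ⟨max Q.left Q'.left, max Q.bot Q'.bot⟩

/-- The upper right corner of the intersection of two rectangles. -/
def hi (Q Q' : Rect) : ℂ := ⟨min Q.right Q'.right, min Q.top Q'.top⟩

variable {Q Q' : Rect} {z : ℂ} {s t : Bool}

theorem lo_comm (Q Q' : Rect) : Q.lo Q' = Q'.lo Q := by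
  simp only [lo, max_comm]

theorem hi_comm (Q Q' : Rect) : Q.hi Q' = Q'.hi Q := by
  simp only [hi, min_comm]

theorem cell_subset_box : Q.cell s t ⊆ Q.box :=
  fun _ hz => ⟨halfOpen_subset_Icc hz.1, halfOpen_subset_Icc hz.2⟩

theorem exists_mem_cell (hz : z ∈ Q.box) : ∃ s t, z ∈ Q.cell s t := by
  obtain ⟨s, hs⟩ := exists_mem_halfOpen Q.left_lt_right hz.1
  obtain ⟨t, ht⟩ := exists_mem_halfOpen Q.bot_lt_top hz.2
  exact ⟨s, t, hs, ht⟩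

theorem box_subset_box_iff : Q.box ⊆ Q'.box ↔
    Q'.left ≤ Q.left ∧ Q.right ≤ Q'.right ∧ Q'.bot ≤ Q.bot ∧ Q.top ≤ Q'.top := by
  rw [box, box, Complex.reProdIm_subset_iff, prod_subset_prod_iff,
    Icc_subset_Icc_iff Q.left_lt_right.le, Icc_subset_Icc_iff Q.bot_lt_top.le, and_assoc]
  simp only [Icc_eq_empty_iff, Q.left_lt_right.le, Q.bot_lt_top.le, not_true_eq_false, or_false]

theorem cell_subset_cell (h : Q.box ⊆ Q'.box) : Q.cell s t ⊆ Q'.cell s t := by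
  obtain ⟨hl, hr, hb, ht⟩ := box_subset_box_iff.1 h
  exact fun z hz => ⟨halfOpen_subset_halfOpen hl hr hz.1, halfOpen_subset_halfOpen hb ht hz.2⟩

theorem isClosed_box (Q : Rect) : IsClosed Q.box :=
  isClosed_Icc.reProdIm isClosed_Icc

theorem eq_lo (hz : z ∈ Q.box ∩ Q'.box) (hre : z.re = Q.left ∨ z.re = Q'.left)
    (him : z.im = Q.bot ∨ z.im = Q'.bot) : z = Q.lo Q' := by
  obtain ⟨⟨⟨h₁, -⟩, h₂, -⟩, ⟨h₃, -⟩, h₄, -⟩ := hz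
  apply Complex.ext <;> simp only [lo] <;> grind

theorem eq_hi (hz : z ∈ Q.box ∩ Q'.box) (hre : z.re = Q.right ∨ z.re = Q'.right)
    (him : z.im = Q.top ∨ z.im = Q'.top) : z = Q.hi Q' := by
  obtain ⟨⟨⟨-, h₁⟩, -, h₂⟩, ⟨-, h₃⟩, -, h₄⟩ := hz
  apply Complex.ext <;> simp only [hi] <;> grind

end Rect

section Tiling

variable {A : Type*} {R : A → Rect}

/-- The part of the open upper half-plane covered by a family of rectangles. -/
def upperRegion (R : A → Rect) : Set ℂ := {z | 0 < z.im ∧ ∃ Q, z ∈ (R Q).box}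

/-- At every point of the upper region each of the four quadrants is locally contained in exactly
one rectangle of the family. -/
def IsTiling (R : A → Rect) : Prop :=
  ∀ z ∈ upperRegion R, ∀ s t, ∃! Q, z ∈ (R Q).cell s t

variable (hR : IsTiling R) (p : upperRegion R)

/-- The tile containing a quadrant at `p`, see `Rect.cell`. -/
noncomputable def tile (s t : Bool) : A := (hR p p.2 s t).choose

/-- The four tiles at `p`, anticlockwise from the north-eastern one. -/
noncomputable def around : Fin 4 → A :=
  ![tile hR p true true, tile hR p false true, tile hR p false false, tile hR p true false]

/-- Two tiles are neighbours at `p` if they contain adjacent quadrants at `p`. -/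
def Neighbours (Q Q' : A) : Prop := ∃ i, s(Q, Q') = s(around hR p i, around hR p (i + 1))

/-- A node is a point of the tiling lying both on a vertical and on a horizontal edge of tiles. -/
def IsNode : Prop :=
  (∃ t, tile hR p true t ≠ tile hR p false t) ∧ ∃ s, tile hR p s true ≠ tile hR p s false

variable {Q Q' : A}

theorem tile_mem_cell (s t : Bool) : p.1 ∈ (R (tile hR p s t)).cell s t :=
  (hR p p.2 s t).choose_spec.1

theorem exists_tile_eq (h : p.1 ∈ (R Q).box) : ∃ s t, tile hR p s t = Q :=
  let ⟨s, t, hst⟩ := Rect.exists_mem_cell h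
  ⟨s, t, ((hR p p.2 s t).choose_spec.2 Q hst).symm⟩

theorem around_mem_box (i : Fin 4) : p.1 ∈ (R (around hR p i)).box := by
  fin_cases i <;> exact Rect.cell_subset_box (tile_mem_cell hR p _ _)

variable {hR p} {s t : Bool} {z : ℂ}

theorem tile_eq (h : p.1 ∈ (R Q).cell s t) : tile hR p s t = Q :=
  ((hR p p.2 s t).choose_spec.2 Q h).symm

theorem Neighbours.symm (h : Neighbours hR p Q Q') : Neighbours hR p Q' Q :=
  h.imp fun _ hi => Sym2.eq_swap.trans hi

theorem neighbours_horizontal (s t : Bool) :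
    Neighbours hR p (tile hR p s t) (tile hR p (!s) t) := by
  cases s <;> cases t
  exacts [⟨2, rfl⟩, ⟨0, Sym2.eq_swap⟩, ⟨2, Sym2.eq_swap⟩, ⟨0, rfl⟩]

theorem neighbours_vertical (s t : Bool) :
    Neighbours hR p (tile hR p s t) (tile hR p s (!t)) := by
  cases s <;> cases t
  exacts [⟨1, Sym2.eq_swap⟩, ⟨1, rfl⟩, ⟨3, rfl⟩, ⟨3, Sym2.eq_swap⟩]

theorem left_eq_right_of_tile_ne (h : tile hR p true t ≠ tile hR p false t) :
    (R (tile hR p true t)).left = p.1.re ∧ (R (tile hR p false t)).right = p.1.re := by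
  have hE := tile_mem_cell hR p true t
  have hW := tile_mem_cell hR p false t
  constructor
  · by_contra hne
    exact h (tile_eq (s := false) ⟨⟨hE.1.1.lt_of_ne hne, hE.1.2.le⟩, hE.2⟩).symm
  · by_contra hne
    exact h (tile_eq (s := true) ⟨⟨hW.1.1.le, hW.1.2.lt_of_ne (Ne.symm hne)⟩, hW.2⟩)

theorem bot_eq_top_of_tile_ne (h : tile hR p s true ≠ tile hR p s false) :
    (R (tile hR p s true)).bot = p.1.im ∧ (R (tile hR p s false)).top = p.1.im := by
  have hN := tile_mem_cell hR p s true
  have hS := tile_mem_cell hR p s false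
  constructor
  · by_contra hne
    exact h (tile_eq (t := false) ⟨hN.1, hN.2.1.lt_of_ne hne, hN.2.2.le⟩).symm
  · by_contra hne
    exact h (tile_eq (t := true) ⟨hS.1, hS.2.1.le, hS.2.2.lt_of_ne (Ne.symm hne)⟩)

theorem neighbours_of_mem (hne : Q ≠ Q') (hp : p.1 ∈ (R Q).box ∩ (R Q').box)
    (hz : z ∈ (R Q).box ∩ (R Q').box) (hzp : z ≠ p) : Neighbours hR p Q Q' := by
  obtain ⟨s, t, rfl⟩ := exists_tile_eq hR p hp.1
  obtain ⟨s', t', rfl⟩ := exists_tile_eq hR p hp.2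
  have hcell := tile_mem_cell hR p s t
  have hcell' := tile_mem_cell hR p s' t'
  rcases Bool.eq_or_eq_not s' s with rfl | rfl <;> rcases Bool.eq_or_eq_not t' t with rfl | rfl
  · exact absurd rfl hne
  · exact neighbours_vertical s' t
  · exact neighbours_horizontal s t'
  rcases not_and_or.1 fun h => hzp (Complex.ext h.1 h.2) with h | h
  · rcases mem_halfOpen_not_or h hz.1.1 hz.2.1 hcell.1 hcell'.1 with h | h
    · exact tile_eq (hR := hR) ⟨h, hcell.2⟩ ▸ neighbours_vertical (!s) t
    · exact tile_eq (hR := hR) ⟨h, hcell'.2⟩ ▸ neighbours_vertical s t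
  · rcases mem_halfOpen_not_or h hz.1.2 hz.2.2 hcell.2 hcell'.2 with h | h
    · exact tile_eq (hR := hR) ⟨hcell.1, h⟩ ▸ neighbours_horizontal s (!t)
    · exact tile_eq (hR := hR) ⟨hcell'.1, h⟩ ▸ neighbours_horizontal s t

theorem IsNode.eq_lo_or_eq_hi (hp : IsNode hR p) (h : Neighbours hR p Q Q') (hne : Q ≠ Q') :
    p.1 = (R Q).lo (R Q') ∨ p.1 = (R Q).hi (R Q') := by
  have hx {t} (h : tile hR p true t ≠ tile hR p false t) := left_eq_right_of_tile_ne h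
  have hy {s} (h : tile hR p s true ≠ tile hR p s false) := bot_eq_top_of_tile_ne h
  obtain ⟨⟨t, ht⟩, s, hs⟩ := hp
  have consecutive (i : Fin 4) (hi : around hR p i ≠ around hR p (i + 1)) :
      p.1 = (R (around hR p i)).lo (R (around hR p (i + 1))) ∨
        p.1 = (R (around hR p i)).hi (R (around hR p (i + 1))) := by
    have hmem := And.intro (around_mem_box hR p i) (around_mem_box hR p (i + 1))
    fin_cases i
    · exact Or.inl <| Rect.eq_lo hmem (Or.inl (hx hi).1.symm) (by cases s <;> simp [around, hy hs])
    · exact Or.inr <| Rect.eq_hi hmem (by cases t <;> simp [around, hx ht]) (Or.inr (hy hi).2.symm)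
    · exact Or.inr <| Rect.eq_hi hmem (Or.inl (hx hi.symm).2.symm)
        (by cases s <;> simp [around, hy hs])
    · exact Or.inl <| Rect.eq_lo hmem (by cases t <;> simp [around, hx ht])
        (Or.inr (hy hi.symm).1.symm)
  obtain ⟨i, hi⟩ := h
  rcases Sym2.eq_iff.1 hi with ⟨rfl, rfl⟩ | ⟨rfl, rfl⟩
  · exact consecutive i hne
  · rw [Rect.lo_comm, Rect.hi_comm]
    exact consecutive i hne.symm

theorem exists_node_right (h : tile hR p true true ≠ tile hR p true false) :
    ∃ q : upperRegion R, IsNode hR q ∧ p.1.im = q.1.im ∧ p.1.re < q.1.re ∧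
      Neighbours hR q (tile hR p true true) (tile hR p true false) := by
  obtain ⟨hN₁, hN₂⟩ := tile_mem_cell hR p true true
  obtain ⟨hS₁, hS₂⟩ := tile_mem_cell hR p true false
  set Q := tile hR p true true
  set Q' := tile hR p true false
  have hlt : p.1.re < min (R Q).right (R Q').right := lt_min hN₁.2 hS₁.2
  let q : upperRegion R := ⟨⟨min (R Q).right (R Q').right, p.1.im⟩, p.2.1, Q,
    ⟨hN₁.1.trans hlt.le, min_le_left _ _⟩, halfOpen_subset_Icc (s := true) hN₂⟩
  have hQ : tile hR q false true = Q := tile_eq ⟨⟨hN₁.1.trans_lt hlt, min_le_left _ _⟩, hN₂⟩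
  have hQ' : tile hR q false false = Q' := tile_eq ⟨⟨hS₁.1.trans_lt hlt, min_le_right _ _⟩, hS₂⟩
  refine ⟨q, ⟨?_, false, hQ ▸ hQ' ▸ h⟩, rfl, hlt, hQ ▸ hQ' ▸ neighbours_vertical false true⟩
  by_contra! heq
  have hright (t) : q.1.re < (R (tile hR q false t)).right :=
    heq t ▸ (tile_mem_cell hR q true t).1.2
  exact lt_irrefl q.1.re (lt_min (hQ ▸ hright true) (hQ' ▸ hright false))

theorem exists_node_up (h : tile hR p true true ≠ tile hR p false true) :
    ∃ q : upperRegion R, IsNode hR q ∧ p.1.im < q.1.im ∧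
      Neighbours hR q (tile hR p true true) (tile hR p false true) := by
  obtain ⟨hE₁, hE₂⟩ := tile_mem_cell hR p true true
  obtain ⟨hW₁, hW₂⟩ := tile_mem_cell hR p false true
  set Q := tile hR p true true
  set Q' := tile hR p false true
  have hlt : p.1.im < min (R Q).top (R Q').top := lt_min hE₂.2 hW₂.2
  let q : upperRegion R := ⟨⟨p.1.re, min (R Q).top (R Q').top⟩, p.2.1.trans hlt, Q,
    halfOpen_subset_Icc (s := true) hE₁, hE₂.1.trans hlt.le, min_le_left _ _⟩
  have hQ : tile hR q true false = Q := tile_eq ⟨hE₁, hE₂.1.trans_lt hlt, min_le_left _ _⟩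
  have hQ' : tile hR q false false = Q' := tile_eq ⟨hW₁, hW₂.1.trans_lt hlt, min_le_right _ _⟩
  refine ⟨q, ⟨⟨false, hQ ▸ hQ' ▸ h⟩, ?_⟩, hlt, hQ ▸ hQ' ▸ neighbours_horizontal true false⟩
  by_contra! heq
  have htop (s) : q.1.im < (R (tile hR q s false)).top :=
    heq s ▸ (tile_mem_cell hR q s true).2.2
  exact lt_irrefl q.1.im (lt_min (hQ ▸ htop true) (hQ' ▸ htop false))

theorem IsNode.around_ne_opposite (hp : IsNode hR p) (i : Fin 4) :
    around hR p i ≠ around hR p (i + 2) := by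
  have hopp (s t) : tile hR p s t ≠ tile hR p (!s) (!t) := fun h => by
    have hcell := tile_mem_cell hR p s t
    have hcell' := h ▸ tile_mem_cell hR p (!s) (!t)
    have hall (s' t') : tile hR p s' t' = tile hR p s t := tile_eq <| by
      rcases Bool.eq_or_eq_not s' s with rfl | rfl <;> rcases Bool.eq_or_eq_not t' t with rfl | rfl
      exacts [hcell, ⟨hcell.1, hcell'.2⟩, ⟨hcell'.1, hcell.2⟩, hcell']
    obtain ⟨⟨t', ht'⟩, -⟩ := hp
    exact ht' ((hall _ _).trans (hall _ _).symm)
  match i with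
  | 0 => exact hopp true true
  | 1 => exact hopp false true
  | 2 => exact hopp false false
  | 3 => exact hopp true false

theorem IsNode.around_pair_ne (hp : IsNode hR p) (i : Fin 4)
    (h : around hR p i = around hR p (i + 1)) :
    around hR p (i + 2) ≠ around hR p (i + 3) := by
  obtain ⟨hx, hy⟩ := hp
  rw [Bool.exists_bool] at hx hy
  intro h'
  match i with
  | 0 => exact hx.elim (absurd h'.symm) (absurd h)
  | 1 => exact hy.elim (absurd h) (absurd h'.symm)
  | 2 => exact hx.elim (absurd h.symm) (absurd h')
  | 3 => exact hy.elim (absurd h') (absurd h.symm)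

theorem IsNode.exists_adjacent_node (hp : IsNode hR p) :
    ∃ q, IsNode hR q ∧ toLex (p.1.im, p.1.re) < toLex (q.1.im, q.1.re) ∧
      ∃ Q Q', Q ≠ Q' ∧ Neighbours hR p Q Q' ∧ Neighbours hR q Q Q' := by
  by_cases hright : tile hR p true true ≠ tile hR p true false
  · obtain ⟨q, hq, him, hre, hneigh⟩ := exists_node_right hright
    exact ⟨q, hq, Prod.Lex.toLex_lt_toLex.2 (Or.inr ⟨him, hre⟩), _, _, hright,
      neighbours_vertical true true, hneigh⟩
  by_cases hup : tile hR p true true ≠ tile hR p false true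
  · obtain ⟨q, hq, him, hneigh⟩ := exists_node_up hup
    exact ⟨q, hq, Prod.Lex.toLex_lt_toLex.2 (Or.inl him), _, _, hup,
      neighbours_horizontal true true, hneigh⟩
  push Not at hright hup
  obtain ⟨t | t, ht⟩ := hp.1
  · have hleft := (left_eq_right_of_tile_ne ht).1
    rw [← hright, hup] at hleft
    exact absurd hleft (tile_mem_cell hR p false true).1.1.ne
  · exact absurd hup ht

variable (hR) in
/-- The graph of the nodes of a tiling, two of them being adjacent when they are the ends of the
common edge of two tiles. -/
def nodeGraph : SimpleGraph {p // IsNode hR p} where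
  Adj p q := p ≠ q ∧ ∃ Q Q', Q ≠ Q' ∧ Neighbours hR p Q Q' ∧ Neighbours hR q Q Q'
  symm := ⟨fun _ _ ⟨hne, Q, Q', h, hp, hq⟩ => ⟨hne.symm, Q, Q', h, hq, hp⟩⟩
  loopless := ⟨fun _ h => h.1 rfl⟩

theorem finite_neighborSet_nodeGraph (p : {p // IsNode hR p}) :
    ((nodeGraph hR).neighborSet p).Finite := by
  let corners : Set ℂ := ⋃ x ∈ range (around hR p) ×ˢ range (around hR p),
    {(R x.1).lo (R x.2), (R x.1).hi (R x.2)}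
  have hcorners : corners.Finite :=
    ((finite_range _).prod (finite_range _)).biUnion fun _ _ => toFinite _
  refine (hcorners.preimage (Subtype.val_injective.comp Subtype.val_injective).injOn).subset ?_
  rintro q ⟨-, Q, Q', hne, ⟨i, hi⟩, hq⟩
  refine mem_biUnion (x := (Q, Q')) ?_ (q.2.eq_lo_or_eq_hi hq hne)
  rcases Sym2.eq_iff.1 hi with ⟨rfl, rfl⟩ | ⟨rfl, rfl⟩
  all_goals exact mk_mem_prod (mem_range_self _) (mem_range_self _)

theorem infinite_reachable_nodeGraph (p : {p // IsNode hR p}) :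
    {q | (nodeGraph hR).Reachable p q}.Infinite := by
  intro hfin
  obtain ⟨q, hpq, hmax⟩ := hfin.exists_maximalFor
    (fun q : {q // IsNode hR q} => toLex (q.1.1.im, q.1.1.re)) _ ⟨p, .refl p⟩
  obtain ⟨u, hu, hlt, hadj⟩ := q.2.exists_adjacent_node
  have hqu : (nodeGraph hR).Adj q ⟨u, hu⟩ := ⟨fun h => hlt.ne (by rw [h]), hadj⟩
  exact (hmax (SimpleGraph.Reachable.trans hpq hqu.reachable) hlt.le).not_gt hlt

section CommonEdge

variable {p q u : {p // IsNode hR p}}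

theorem eq_of_neighbours (hpq : p ≠ q) (hpu : p ≠ u) (hne : Q ≠ Q')
    (hp : Neighbours hR p Q Q') (hq : Neighbours hR q Q Q') (hu : Neighbours hR u Q Q') :
    q = u := by
  have := p.2.eq_lo_or_eq_hi hp hne
  have := q.2.eq_lo_or_eq_hi hq hne
  have := u.2.eq_lo_or_eq_hi hu hne
  grind

theorem lo_mem_upperRegion (hpq : p ≠ q) (hne : Q ≠ Q')
    (hp : Neighbours hR p Q Q') (hq : Neighbours hR q Q Q') :
    (R Q).lo (R Q') ∈ upperRegion R := by
  have := p.2.eq_lo_or_eq_hi hp hne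
  have := q.2.eq_lo_or_eq_hi hq hne
  grind

end CommonEdge

theorem exists_escaping_edges (hR : IsTiling R) :
    ∃ (s : {p // IsNode hR p} → {p // IsNode hR p}) (i : {p // IsNode hR p} → Fin 4),
      (WellFounded fun p q => s p = q) ∧ ∀ p, p ≠ s p ∧
        around hR p (i p) ≠ around hR p (i p + 1) ∧
        Neighbours hR (s p) (around hR p (i p)) (around hR p (i p + 1)) := by
  obtain ⟨s, hadj, hwf⟩ := exists_wellFounded_successor
    (finite_neighborSet_nodeGraph (hR := hR)) infinite_reachable_nodeGraph
  have hedge (p : {p // IsNode hR p}) : ∃ i, around hR p i ≠ around hR p (i + 1) ∧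
      Neighbours hR (s p) (around hR p i) (around hR p (i + 1)) := by
    obtain ⟨-, Q, Q', hne, ⟨i, hi⟩, hs⟩ := hadj p
    rcases Sym2.eq_iff.1 hi with ⟨rfl, rfl⟩ | ⟨rfl, rfl⟩
    · exact ⟨i, hne, hs⟩
    · exact ⟨i, hne.symm, hs.symm⟩
  choose i hi using hedge
  exact ⟨s, i, hwf, fun p => ⟨(hadj p).ne, hi p⟩⟩

theorem exists_circulation (hR : IsTiling R) (c : upperRegion R → ℤ) :
    ∃ m : A → A → ℤ, (∀ Q Q', m Q Q' = -m Q' Q) ∧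
      (∀ p, IsNode hR p → ∑ i, m (around hR p i) (around hR p (i + 1)) = c p) ∧
      ∀ Q Q', m Q Q' ≠ 0 → (R Q).lo (R Q') ∈ upperRegion R := by
  obtain ⟨s, i, hwf, hs⟩ := exists_escaping_edges hR
  let e (p : {p // IsNode hR p}) : A × A := (around hR p (i p), around hR p (i p + 1))
  have hself (p) : Neighbours hR p.1 (e p).1 (e p).2 := ⟨i p, rfl⟩
  obtain ⟨w, hw, hsupp⟩ := exists_linearCombination_eq_of_triangular
    (fun p : {p // IsNode hR p} => cycle (around hR p)) e hwf
    (fun p => cycle_apply_eq_one p.2.around_ne_opposite p.2.around_pair_ne (hs p).2.1 ▸ isUnit_one)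
    (fun p q hqp h => eq_of_neighbours (hs p).1 hqp.symm (hs p).2.1 (hself p) (hs p).2.2
      (exists_eq_of_cycle_ne_zero h))
    fun p => c p
  refine ⟨fun Q Q' => w (Q, Q') - w (Q', Q), fun _ _ => (neg_sub _ _).symm,
    fun p hp => (linearCombination_cycle _ _).symm.trans (hw ⟨p, hp⟩), fun Q Q' h => ?_⟩
  have lo_mem (p) : (R (e p).1).lo (R (e p).2) ∈ upperRegion R :=
    lo_mem_upperRegion (hs p).1 (hs p).2.1 (hself p) (hs p).2.2
  have hor : w (Q, Q') ≠ 0 ∨ w (Q', Q) ≠ 0 := by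
    contrapose! h
    rw [h.1, h.2, sub_zero]
  rcases hor.imp (@hsupp (Q, Q')) (@hsupp (Q', Q)) with ⟨p, hp⟩ | ⟨p, hp⟩
  · simpa only [hp] using lo_mem p
  · simpa only [hp, Rect.lo_comm] using lo_mem p

theorem exists_glued_cochain {P B : Type*} {S : B → Set P} {f : P → B → B → ℤ}
    (hf : ∀ p x y, f p x y = -f p y x)
    (hagree : ∀ x y, ∀ p ∈ S x ∩ S y, ∀ q ∈ S x ∩ S y, f p x y = f q x y) :
    ∃ m : B → B → ℤ, (∀ x y, m x y = -m y x) ∧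
      (∀ x y, ∀ p ∈ S x ∩ S y, m x y = f p x y) ∧ ∀ x y, S x ∩ S y = ∅ → m x y = 0 := by
  classical
  let m (x y : B) : ℤ := if h : (S x ∩ S y).Nonempty then f h.some x y else 0
  have hmf {x y p} (hp : p ∈ S x ∩ S y) : m x y = f p x y :=
    (dif_pos ⟨p, hp⟩).trans (hagree x y _ (Nonempty.some_mem _) p hp)
  have hm0 {x y} (h : S x ∩ S y = ∅) : m x y = 0 := dif_neg (not_nonempty_iff_eq_empty.2 h)
  refine ⟨m, fun x y => ?_, fun _ _ _ => hmf, fun _ _ => hm0⟩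
  rcases (S x ∩ S y).eq_empty_or_nonempty with h | ⟨p, hp⟩
  · rw [hm0 h, hm0 (inter_comm _ _ ▸ h), neg_zero]
  · rw [hmf hp, hmf hp.symm, hf]

theorem sum_around_eq_zero (hp : ¬ IsNode hR p) {d : A → A → ℤ} (hd : ∀ Q Q', d Q Q' = -d Q' Q) :
    ∑ i, d (around hR p i) (around hR p (i + 1)) = 0 := by
  have hself (Q) : d Q Q = 0 := self_eq_neg.1 (hd Q Q)
  simp only [around, Fin.sum_univ_four, Fin.isValue, Fin.reduceAdd, Matrix.cons_val]
  rcases not_and_or.1 hp with h | h <;> push Not at h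
  · rw [h true, h false, hself, hself, hd (tile hR p false true)]
    ring
  · rw [h true, h false, hself, hself, hd (tile hR p true false)]
    ring

theorem exists_local_primitive {n : A → A → A → ℤ} (halt : ∀ Q Q' Q'', n Q Q' Q'' = -n Q Q'' Q')
    (hcoc : ∀ Q₀ Q₁ Q₂ Q₃, p.1 ∈ (R Q₀).box → p.1 ∈ (R Q₁).box → p.1 ∈ (R Q₂).box →
      p.1 ∈ (R Q₃).box → n Q₁ Q₂ Q₃ - n Q₀ Q₂ Q₃ + n Q₀ Q₁ Q₃ - n Q₀ Q₁ Q₂ = 0)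
    {m : A → A → ℤ} (hm : ∀ Q Q', m Q Q' = -m Q' Q)
    (hsum : ∑ i, m (around hR p i) (around hR p (i + 1)) =
      ∑ i, n (around hR p 0) (around hR p i) (around hR p (i + 1))) :
    ∃ f : A → A → ℤ, (∀ Q Q', f Q Q' = -f Q' Q) ∧
      (∀ Q Q', Neighbours hR p Q Q' → f Q Q' = m Q Q') ∧
      ∀ Q Q' Q'', p.1 ∈ (R Q).box → p.1 ∈ (R Q').box → p.1 ∈ (R Q'').box →
        f Q' Q'' - f Q Q'' + f Q Q' = n Q Q' Q'' := by
  obtain ⟨g, hg⟩ := exists_potential (q := around hR p)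
    (d := fun Q Q' => m Q Q' - n (around hR p 0) Q Q') (fun Q Q' => by grind)
    (by rw [Finset.sum_sub_distrib, hsum, sub_self])
  refine ⟨fun Q Q' => n (around hR p 0) Q Q' + g Q' - g Q, fun Q Q' => by grind, ?_, ?_⟩
  · rintro Q Q' ⟨i, hi⟩
    have := hg i
    rcases Sym2.eq_iff.1 hi with ⟨rfl, rfl⟩ | ⟨rfl, rfl⟩ <;> grind
  · intro Q Q' Q'' h h' h''
    linarith [hcoc _ _ _ _ (around_mem_box hR p 0) h h' h'']

theorem exists_coboundary (hR : IsTiling R) {n : A → A → A → ℤ}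
    (halt : ∀ Q Q' Q'', n Q Q' Q'' = -n Q Q'' Q')
    (hcoc : ∀ p ∈ upperRegion R, ∀ Q₀ Q₁ Q₂ Q₃, p ∈ (R Q₀).box → p ∈ (R Q₁).box →
      p ∈ (R Q₂).box → p ∈ (R Q₃).box → n Q₁ Q₂ Q₃ - n Q₀ Q₂ Q₃ + n Q₀ Q₁ Q₃ - n Q₀ Q₁ Q₂ = 0) :
    ∃ m : A → A → ℤ, (∀ Q Q', m Q Q' = -m Q' Q) ∧
      (∀ Q Q', ((R Q).box ∩ (R Q').box ∩ {z | z.im = 0}).Nonempty → m Q Q' = 0) ∧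
      ∀ p ∈ upperRegion R, ∀ Q Q' Q'', p ∈ (R Q).box → p ∈ (R Q').box → p ∈ (R Q'').box →
        m Q' Q'' - m Q Q'' + m Q Q' = n Q Q' Q'' := by
  classical
  obtain ⟨m₀, hm₀, hsum, hlo⟩ := exists_circulation hR fun p =>
    ∑ i, n (around hR p 0) (around hR p i) (around hR p (i + 1))
  have hlocal (p : upperRegion R) := exists_local_primitive (hR := hR) (p := p) halt
    (hcoc p p.2) hm₀ <| if hp : IsNode hR p then hsum p hp else
      (sum_around_eq_zero hp hm₀).trans (sum_around_eq_zero hp (halt _)).symm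
  choose f hf hfm₀ hδ using hlocal
  have hself (p Q) : f p Q Q = 0 := self_eq_neg.1 (hf p Q Q)
  obtain ⟨m, hm, hmf, hm0⟩ := exists_glued_cochain
    (S := fun Q => {p : upperRegion R | p.1 ∈ (R Q).box}) hf fun Q Q' p hp q hq => by
      rcases eq_or_ne Q Q' with rfl | hne
      · rw [hself, hself]
      rcases eq_or_ne p q with rfl | hpq
      · rfl
      have hpq := Subtype.coe_ne_coe.2 hpq
      rw [hfm₀ _ _ _ (neighbours_of_mem hne hp hq hpq.symm),
        hfm₀ _ _ _ (neighbours_of_mem hne hq hp hpq)]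
  refine ⟨m, hm, ?_, fun p hp Q Q' Q'' h h' h'' => ?_⟩
  · rintro Q Q' ⟨z, hz, him⟩
    rcases eq_empty_or_nonempty {p : upperRegion R | p.1 ∈ (R Q).box ∩ (R Q').box}
      with h | ⟨p, hp⟩
    · exact hm0 _ _ h
    rcases eq_or_ne Q Q' with rfl | hne
    · exact self_eq_neg.1 (hm Q Q)
    have hzp : z ≠ p := fun h => p.2.1.ne' (h ▸ him)
    rw [hmf _ _ p hp, hfm₀ _ _ _ (neighbours_of_mem hne hp hz hzp)]
    by_contra hne0
    exact ((hlo _ _ hne0).1.trans_le (max_le hz.1.2.1 hz.2.2.1)).ne' him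
  · rw [hmf _ _ ⟨p, hp⟩ ⟨h', h''⟩, hmf _ _ ⟨p, hp⟩ ⟨h, h''⟩, hmf _ _ ⟨p, hp⟩ ⟨h, h'⟩]
    exact hδ _ _ _ _ h h' h''

end Tiling

section Dyadic

/-- The index `i` such that the interval of `halfOpen` type `s` with ends `i / 2 ^ n` and
`(i + 1) / 2 ^ n` contains `x`. -/
noncomputable def dyadicIndex (s : Bool) (n : ℕ) (x : ℝ) : ℤ :=
  bif s then ⌊x * 2 ^ n⌋ else ⌈x * 2 ^ n⌉ - 1

variable {s : Bool} {m n : ℕ} {i j : ℤ} {x : ℝ}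

theorem mem_halfOpen_dyadic_iff :
    x ∈ halfOpen s (i / 2 ^ n) ((i + 1) / 2 ^ n) ↔ dyadicIndex s n x = i := by
  have hn : (0 : ℝ) < 2 ^ n := by positivity
  cases s
  · rw [dyadicIndex, cond_false, sub_eq_iff_eq_add, Int.ceil_eq_iff, Int.cast_add, Int.cast_one,
      add_sub_cancel_right, ← div_lt_iff₀ hn, ← le_div_iff₀ hn]
    rfl
  · rw [dyadicIndex, cond_true, Int.floor_eq_iff, ← div_le_iff₀ hn, ← lt_div_iff₀ hn]
    rfl

theorem dyadicIndex_nonneg (hx : 0 < x) : 0 ≤ dyadicIndex s n x := by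
  have : 0 < x * 2 ^ n := by positivity
  cases s
  · exact Int.sub_nonneg.2 (Int.one_le_ceil_iff.2 this)
  · exact Int.floor_nonneg.2 this.le

theorem Icc_dyadic_subset (hmn : m ≤ n) (hx : x ∈ halfOpen s (i / 2 ^ n) ((i + 1) / 2 ^ n))
    (hx' : x ∈ halfOpen s (j / 2 ^ m) ((j + 1) / 2 ^ m)) :
    Icc ((i : ℝ) / 2 ^ n) ((i + 1) / 2 ^ n) ⊆ Icc ((j : ℝ) / 2 ^ m) ((j + 1) / 2 ^ m) := by
  obtain ⟨k, rfl⟩ := Nat.exists_eq_add_of_le hmn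
  have hn : (0 : ℝ) < 2 ^ (m + k) := by positivity
  have rescale (y : ℝ) : y / 2 ^ m = y * 2 ^ k / 2 ^ (m + k) := by
    rw [pow_add, mul_div_mul_right _ _ (by positivity)]
  have hlt : (i : ℝ) / 2 ^ (m + k) < (j + 1) / 2 ^ m ∧ (j : ℝ) / 2 ^ m < (i + 1) / 2 ^ (m + k) := by
    cases s
    exacts [⟨hx.1.trans_le hx'.2, hx'.1.trans_le hx.2⟩, ⟨hx.1.trans_lt hx'.2, hx'.1.trans_lt hx.2⟩]
  simp only [rescale, div_lt_div_iff_of_pos_right hn] at hlt ⊢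
  norm_cast at hlt
  apply Icc_subset_Icc <;> rw [div_le_div_iff_of_pos_right hn]
  · exact_mod_cast Int.lt_add_one_iff.1 hlt.2
  · exact_mod_cast Int.add_one_le_iff.2 hlt.1

theorem finite_dyadic_inter_Icc (n : ℕ) (a b : ℝ) :
    {i : ℤ | (Icc (i / 2 ^ n : ℝ) ((i + 1) / 2 ^ n) ∩ Icc a b).Nonempty}.Finite := by
  refine (finite_Icc (⌈a * 2 ^ n⌉ - 1) ⌊b * 2 ^ n⌋).subset ?_
  rintro i ⟨x, ⟨h₁, h₂⟩, h₃, h₄⟩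
  have hn : (0 : ℝ) < 2 ^ n := by positivity
  refine ⟨sub_le_iff_le_add.2 (Int.ceil_le.2 ?_), Int.le_floor.2 ?_⟩
  · exact_mod_cast (le_div_iff₀ hn).1 (h₃.trans h₂)
  · exact (div_le_iff₀ hn).1 (h₁.trans h₄)

end Dyadic

/-- A dyadic square of side `2⁻ˡᵉᵛᵉˡ`, placed by its column and its row in the grid of that side. -/
@[ext]
structure DyadicSquare where
  level : ℕ
  col : ℤ
  row : ℤ

namespace DyadicSquare

/-- The rectangle underlying a dyadic square. -/
noncomputable def toRect (Q : DyadicSquare) : Rect where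
  left := Q.col / 2 ^ Q.level
  right := (Q.col + 1) / 2 ^ Q.level
  bot := Q.row / 2 ^ Q.level
  top := (Q.row + 1) / 2 ^ Q.level
  left_lt_right := by gcongr; exact lt_add_one _
  bot_lt_top := by gcongr; exact lt_add_one _

/-- The dyadic square of level `n` having `z` in its cell of type `(s, t)`. -/
noncomputable def containing (s t : Bool) (n : ℕ) (z : ℂ) : DyadicSquare :=
  ⟨n, dyadicIndex s n z.re, dyadicIndex t n z.im⟩

variable {Q Q' : DyadicSquare} {s t : Bool} {z w : ℂ} {n : ℕ}

theorem mem_cell_iff : z ∈ Q.toRect.cell s t ↔ containing s t Q.level z = Q := by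
  rw [DyadicSquare.ext_iff]
  exact (and_congr mem_halfOpen_dyadic_iff mem_halfOpen_dyadic_iff).trans (and_iff_right rfl).symm

theorem mem_cell_containing : z ∈ (containing s t n z).toRect.cell s t :=
  mem_cell_iff.2 rfl

theorem box_subset_box (hz : z ∈ Q.toRect.cell s t) (hz' : z ∈ Q'.toRect.cell s t)
    (hle : Q'.level ≤ Q.level) : Q.toRect.box ⊆ Q'.toRect.box :=
  Complex.reProdIm_subset_iff'.2 <| Or.inl
    ⟨Icc_dyadic_subset hle hz.1 hz'.1, Icc_dyadic_subset hle hz.2 hz'.2⟩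

theorem level_le_of_box_subset (h : Q.toRect.box ⊆ Q'.toRect.box) : Q'.level ≤ Q.level := by
  obtain ⟨hleft, hright, -⟩ := Rect.box_subset_box_iff.1 h
  have hwidth : (1 : ℝ) / 2 ^ Q.level ≤ 1 / 2 ^ Q'.level := by
    simp only [toRect, add_div] at hleft hright
    linarith
  exact (pow_le_pow_iff_right₀ one_lt_two).1 <|
    (one_div_le_one_div (by positivity) (by positivity)).1 hwidth

theorem dist_le_of_mem_box (hz : z ∈ Q.toRect.box) (hw : w ∈ Q.toRect.box) :
    dist z w ≤ 2 / 2 ^ Q.level := by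
  have key {x y : ℝ} {i : ℤ} (hx : x ∈ Icc (i / 2 ^ Q.level : ℝ) ((i + 1) / 2 ^ Q.level))
      (hy : y ∈ Icc (i / 2 ^ Q.level : ℝ) ((i + 1) / 2 ^ Q.level)) :
      |x - y| ≤ 1 / 2 ^ Q.level :=
    (Real.dist_le_of_mem_Icc hx hy).trans_eq (by ring)
  calc dist z w ≤ |z.re - w.re| + |z.im - w.im| :=
        (dist_eq_norm z w).trans_le (Complex.norm_le_abs_re_add_abs_im (z - w))
    _ ≤ 1 / 2 ^ Q.level + 1 / 2 ^ Q.level := add_le_add (key hz.1 hw.1) (key hz.2 hw.2)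
    _ = 2 / 2 ^ Q.level := by ring

theorem finite_level_le_inter_ball (N : ℕ) (z : ℂ) (r : ℝ) :
    {Q : DyadicSquare | Q.level ≤ N ∧ (Q.toRect.box ∩ Metric.ball z r).Nonempty}.Finite := by
  let I (n : ℕ) (x : ℝ) : Set ℤ :=
    {i | (Icc (i / 2 ^ n : ℝ) ((i + 1) / 2 ^ n) ∩ Icc (x - r) (x + r)).Nonempty}
  have hI (n : ℕ) (x : ℝ) : (I n x).Finite := finite_dyadic_inter_Icc n _ _
  refine ((finite_Iic N).biUnion fun n _ => ((hI n z.re).prod (hI n z.im)).image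
    fun x => (⟨n, x.1, x.2⟩ : DyadicSquare)).subset ?_
  rintro Q ⟨hN, w, hw, hwz⟩
  rw [Metric.mem_ball, dist_eq_norm] at hwz
  have hre := abs_sub_le_iff.1 ((Complex.abs_re_le_norm (w - z)).trans hwz.le)
  have him := abs_sub_le_iff.1 ((Complex.abs_im_le_norm (w - z)).trans hwz.le)
  refine mem_biUnion hN ⟨(Q.col, Q.row), ⟨⟨w.re, hw.1, ?_⟩, w.im, hw.2, ?_⟩, rfl⟩
  · constructor <;> linarith
  · constructor <;> linarith

end DyadicSquare

section DyadicTiles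

variable {ι : Type*} {U : ι → Set ℂ}

variable (U) in
/-- The tiles adapted to a covering: the dyadic squares in the closed upper half-plane which are
maximal among the dyadic squares contained in a member of the covering. -/
def IsTile (Q : DyadicSquare) : Prop :=
  0 ≤ Q.row ∧ MaximalFor (fun Q => ∃ k, Q.toRect.box ⊆ U k) (fun Q => Q.toRect.box) Q

variable {Q Q' : DyadicSquare} {s t : Bool} {z : ℂ} {k : ι}

theorem exists_level_eventually_box_subset (hU : U k ∈ 𝓝 z) :
    ∃ N, ∀ᶠ w in 𝓝 z, ∀ Q : DyadicSquare, N ≤ Q.level → w ∈ Q.toRect.box →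
      Q.toRect.box ⊆ U k := by
  obtain ⟨δ, hδ, hball⟩ := Metric.mem_nhds_iff.1 hU
  obtain ⟨N, hN⟩ := exists_pow_lt_of_lt_one (show 0 < δ / 4 by positivity) one_half_lt_one
  refine ⟨N, ?_⟩
  filter_upwards [Metric.ball_mem_nhds z (half_pos hδ)] with w hw Q hQ hwQ v hv
  refine hball ?_
  have hside : (2 : ℝ) / 2 ^ Q.level ≤ 2 / 2 ^ N := by gcongr; exact one_le_two
  calc dist v z ≤ dist v w + dist w z := dist_triangle v w z
    _ < 2 / 2 ^ N + δ / 2 :=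
      add_lt_add_of_le_of_lt ((DyadicSquare.dist_le_of_mem_box hv hwQ).trans hside) hw
    _ = 2 * (1 / 2) ^ N + δ / 2 := by rw [one_div, inv_pow, div_eq_mul_inv]
    _ < δ := by linarith

theorem IsTile.im_nonneg (hQ : IsTile U Q) (hz : z ∈ Q.toRect.box) : 0 ≤ z.im :=
  (div_nonneg (Int.cast_nonneg hQ.1) (by positivity)).trans hz.2.1

theorem IsTile.eq_of_mem_cell (hQ : IsTile U Q) (hQ' : IsTile U Q') (hz : z ∈ Q.toRect.cell s t)
    (hz' : z ∈ Q'.toRect.cell s t) : Q = Q' := by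
  wlog hle : Q'.level ≤ Q.level generalizing Q Q'
  · exact (this hQ' hQ hz' hz (le_of_not_ge hle)).symm
  have hsub := hQ.2.2 hQ'.2.prop (DyadicSquare.box_subset_box hz hz' hle)
  rw [← DyadicSquare.mem_cell_iff.1 hz, ← DyadicSquare.mem_cell_iff.1 hz',
    hle.antisymm (DyadicSquare.level_le_of_box_subset hsub)]

theorem exists_isTile_mem_cell (hU : IsOpen (U k)) (hz : z ∈ U k)
    (hrow : ∀ n, 0 ≤ dyadicIndex t n z.im) : ∃ Q, IsTile U Q ∧ z ∈ Q.toRect.cell s t := by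
  classical
  have hex : ∃ n, ∃ k, (DyadicSquare.containing s t n z).toRect.box ⊆ U k := by
    obtain ⟨N, hN⟩ := exists_level_eventually_box_subset (hU.mem_nhds hz)
    exact ⟨N, k, hN.self_of_nhds _ le_rfl (Rect.cell_subset_box DyadicSquare.mem_cell_containing)⟩
  refine ⟨DyadicSquare.containing s t (Nat.find hex) z, ⟨hrow _, Nat.find_spec hex, ?_⟩,
    DyadicSquare.mem_cell_containing⟩
  rintro Q hQ hsub
  have hQz := DyadicSquare.mem_cell_iff.1
    (Rect.cell_subset_cell hsub (DyadicSquare.mem_cell_containing (s := s) (t := t)))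
  have hlevel : Nat.find hex ≤ Q.level := Nat.find_min' hex (hQz.symm ▸ hQ)
  exact DyadicSquare.box_subset_box (hQz ▸ DyadicSquare.mem_cell_containing)
    DyadicSquare.mem_cell_containing hlevel

theorem isTiling_isTile (hU : ∀ k, IsOpen (U k)) :
    IsTiling fun Q : {Q // IsTile U Q} => Q.1.toRect := by
  rintro z ⟨him, Q₀, hz⟩ s t
  obtain ⟨k, hk⟩ := Q₀.2.2.prop
  obtain ⟨Q, hQ, hzQ⟩ := exists_isTile_mem_cell (s := s) (hU k) (hk hz)
    fun n => dyadicIndex_nonneg (s := t) him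
  exact ⟨⟨Q, hQ⟩, hzQ, fun Q' hQ' => Subtype.ext (Q'.2.eq_of_mem_cell hQ hQ' hzQ)⟩

theorem IsTile.level_le {N : ℕ} {w : ℂ} (hQ : IsTile U Q) (hw : w ∈ Q.toRect.box)
    (hN : ∀ Q' : DyadicSquare, N ≤ Q'.level → w ∈ Q'.toRect.box → ∃ k, Q'.toRect.box ⊆ U k) :
    Q.level ≤ N := by
  obtain ⟨s, t, hs⟩ := Rect.exists_mem_cell hw
  by_contra! hlt
  have hmem := DyadicSquare.mem_cell_containing (s := s) (t := t) (n := N) (z := w)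
  exact hlt.not_ge <| DyadicSquare.level_le_of_box_subset <|
    hQ.2.2 (hN _ le_rfl (Rect.cell_subset_box hmem))
      (DyadicSquare.box_subset_box hs hmem hlt.le)

theorem locallyFinite_isTile (hU : ∀ k, IsOpen (U k)) :
    LocallyFinite fun Q : {Q // IsTile U Q} =>
      ((↑) ⁻¹' Q.1.toRect.box : Set ↥(⋃ k, U k)) := by
  rintro ⟨y, hy⟩
  obtain ⟨k, hk⟩ := mem_iUnion.1 hy
  obtain ⟨N, hN⟩ := exists_level_eventually_box_subset ((hU k).mem_nhds hk)
  obtain ⟨δ, hδ, hball⟩ := Metric.eventually_nhds_iff_ball.1 hN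
  refine ⟨(↑) ⁻¹' Metric.ball y δ,
    continuous_subtype_val.continuousAt.preimage_mem_nhds (Metric.ball_mem_nhds y hδ), ?_⟩
  refine ((DyadicSquare.finite_level_le_inter_ball N y δ).preimage
    Subtype.val_injective.injOn).subset ?_
  rintro Q ⟨w, hwQ, hw⟩
  exact ⟨Q.2.level_le hwQ fun Q' hQ' hwQ' => ⟨k, hball w hw Q' hQ' hwQ'⟩, w, hwQ, hw⟩

end DyadicTiles

theorem exists_mem_forall_lt_two_mul {Y : Type*} {S : Set Y} {ε : Y → ℝ} (hS : S.Nonempty)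
    (hpos : ∀ y ∈ S, 0 < ε y) (hbdd : BddAbove (ε '' S)) : ∃ y₀ ∈ S, ∀ y ∈ S, ε y < 2 * ε y₀ := by
  obtain ⟨y₁, hy₁⟩ := hS
  have hsup : 0 < sSup (ε '' S) := (hpos y₁ hy₁).trans_le (le_csSup hbdd (mem_image_of_mem ε hy₁))
  obtain ⟨_, ⟨y₀, hy₀, rfl⟩, hlt⟩ :=
    exists_lt_of_lt_csSup ⟨_, mem_image_of_mem ε hy₁⟩ (half_lt_self hsup)
  exact ⟨y₀, hy₀, fun y hy => by linarith [le_csSup hbdd (mem_image_of_mem ε hy)]⟩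

section Swelling

variable {X A : Type*} [PseudoMetricSpace X] {C O : A → Set X}

theorem exists_radius_of_locallyFinite (hC : ∀ a, IsClosed (C a)) (hfin : LocallyFinite C)
    (hO : ∀ a, IsOpen (O a)) (hCO : ∀ a, C a ⊆ O a) :
    ∃ ε : X → ℝ, (∀ y, 0 < ε y ∧ ε y ≤ 1) ∧
      ∀ y, ∀ z ∈ Metric.ball y (ε y), ∀ a, (z ∈ C a → y ∈ C a) ∧ (y ∈ C a → z ∈ O a) := by
  have hev (y : X) : ∀ᶠ z in 𝓝 y, ∀ a, (z ∈ C a → y ∈ C a) ∧ (y ∈ C a → z ∈ O a) := by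
    have hmem : ∀ᶠ z in 𝓝 y, ∀ a ∈ {a | y ∈ C a}, z ∈ O a :=
      (hfin.point_finite y).eventually_all.2 fun a ha => (hO a).mem_nhds (hCO a ha)
    filter_upwards [hfin.eventually_subset hC y, hmem] with z h h' a
    exact ⟨@h a, h' a⟩
  choose ε hε hball using fun y => Metric.eventually_nhds_iff_ball.1 (hev y)
  exact ⟨fun y => min (ε y) 1, fun y => ⟨lt_min (hε y) one_pos, min_le_right _ _⟩,
    fun y z hz => hball y z (Metric.ball_subset_ball (min_le_left _ _) hz)⟩

theorem exists_isOpen_swelling (hC : ∀ a, IsClosed (C a)) (hfin : LocallyFinite C)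
    (hO : ∀ a, IsOpen (O a)) (hCO : ∀ a, C a ⊆ O a) :
    ∃ W : A → Set X, (∀ a, IsOpen (W a)) ∧ (∀ a, C a ⊆ W a) ∧ (∀ a, W a ⊆ O a) ∧
      ∀ z, ∃ y, ∀ a, z ∈ W a → y ∈ C a := by
  obtain ⟨ε, hε, hball⟩ := exists_radius_of_locallyFinite hC hfin hO hCO
  have hthird (y : X) : ε y / 3 ≤ ε y := by linarith [(hε y).1]
  refine ⟨fun a => ⋃ y ∈ C a, Metric.ball y (ε y / 3),
    fun a => isOpen_biUnion fun y _ => Metric.isOpen_ball,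
    fun a y hy => mem_biUnion hy (Metric.mem_ball_self (div_pos (hε y).1 three_pos)),
    fun a => iUnion₂_subset fun y hy z hz =>
      (hball y z (Metric.ball_subset_ball (hthird y) hz) a).2 hy, fun z => ?_⟩
  let S : Set X := {y | z ∈ Metric.ball y (ε y / 3)}
  rcases S.eq_empty_or_nonempty with hS | hS
  · refine ⟨z, fun a hz => ?_⟩
    obtain ⟨y, -, hy⟩ := mem_iUnion₂.1 hz
    exact absurd hy (eq_empty_iff_forall_notMem.1 hS y)
  obtain ⟨y₀, hy₀, hmax⟩ := exists_mem_forall_lt_two_mul hS (fun y _ => (hε y).1)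
    ⟨1, forall_mem_image.2 fun y _ => (hε y).2⟩
  refine ⟨y₀, fun a hz => ?_⟩
  obtain ⟨y, hya, hy : dist z y < ε y / 3⟩ := mem_iUnion₂.1 hz
  -- The balls were shrunk to a third so that `y` still lies in the full ball around `y₀`.
  have hdist : dist y y₀ < ε y₀ := by
    linarith [dist_triangle_left y y₀ z, Metric.mem_ball.1 hy₀, hmax y hy]
  exact (hball y₀ y hdist a).1 hya

end Swelling

section Fold

/-- The folding of the plane along the real axis onto the closed upper half-plane. Preimages under
it are symmetric. -/
def fold (z : ℂ) : ℂ := ⟨z.re, |z.im|⟩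

theorem continuous_fold : Continuous fold :=
  Complex.equivRealProdCLM.symm.continuous.comp
    (Complex.continuous_re.prodMk Complex.continuous_im.abs)

theorem fold_conj (z : ℂ) : fold (starRingEnd ℂ z) = fold z := by
  simp only [fold, Complex.conj_re, Complex.conj_im, abs_neg]

theorem fold_eq_self {z : ℂ} (hz : 0 ≤ z.im) : fold z = z := by
  rw [fold, abs_of_nonneg hz]

theorem fold_mem_iff {S : Set ℂ} (hS : starRingEnd ℂ '' S = S) {z : ℂ} :
    fold z ∈ S ↔ z ∈ S := by
  have hconj : starRingEnd ℂ z ∈ S ↔ z ∈ S := by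
    rw [← hS, (starRingEnd ℂ).injective.mem_set_image, hS]
  rcases le_total 0 z.im with him | him
  · rw [fold_eq_self him]
  · rw [← fold_conj, fold_eq_self (neg_nonneg.2 him), hconj]

theorem conj_image_preimage_fold (S : Set ℂ) :
    starRingEnd ℂ '' (fold ⁻¹' S) = fold ⁻¹' S := by
  rw [image_eq_preimage_of_inverse Complex.conj_conj Complex.conj_conj, ← preimage_comp]
  exact congrArg (· ⁻¹' S) (funext fold_conj)

end Fold

section Refinement

variable {ι : Type*} {U : ι → Set ℂ}

theorem exists_symmetric_refinement (hUopen : ∀ i, IsOpen (U i))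
    (hUsym : ∀ i, starRingEnd ℂ '' U i = U i) {r : {Q // IsTile U Q} → ι}
    (hr : ∀ Q, Q.1.toRect.box ⊆ U (r Q)) :
    ∃ V : {Q // IsTile U Q} → Set ℂ, (∀ Q, IsOpen (V Q)) ∧ (∀ Q, starRingEnd ℂ '' V Q = V Q) ∧
      ⋃ i, U i ⊆ ⋃ Q, V Q ∧ (∀ Q, V Q ⊆ U (r Q)) ∧
      ∀ z, ∃ y : ℂ, (z.im = 0 → y.im = 0) ∧ ∀ Q, z ∈ V Q → y ∈ Q.1.toRect.box := by
  let C : Option {Q // IsTile U Q} → Set ↥(⋃ i, U i) :=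
    Option.elim' {z | z.1.im = 0} fun Q => (↑) ⁻¹' Q.1.toRect.box
  let O : Option {Q // IsTile U Q} → Set ↥(⋃ i, U i) :=
    Option.elim' univ fun Q => (↑) ⁻¹' U (r Q)
  have hC : ∀ a, IsClosed (C a) := Option.forall.2
    ⟨isClosed_eq (Complex.continuous_im.comp continuous_subtype_val) continuous_const,
      fun Q => Q.1.toRect.isClosed_box.preimage continuous_subtype_val⟩
  have hO : ∀ a, IsOpen (O a) := Option.forall.2
    ⟨isOpen_univ, fun Q => (hUopen (r Q)).preimage continuous_subtype_val⟩
  have hCO : ∀ a, C a ⊆ O a := Option.forall.2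
    ⟨subset_univ _, fun Q => preimage_mono (hr Q)⟩
  obtain ⟨W, hWopen, hCW, hWO, hnerve⟩ :=
    exists_isOpen_swelling hC ((locallyFinite_isTile hUopen).option_elim' _) hO hCO
  refine ⟨fun Q => fold ⁻¹' (Subtype.val '' W (some Q)),
    fun Q => ((isOpen_iUnion hUopen).isOpenMap_subtype_val _ (hWopen _)).preimage continuous_fold,
    fun Q => conj_image_preimage_fold _, fun z hz => ?_, fun Q z hz => ?_, fun z => ?_⟩
  · obtain ⟨i, hi⟩ := mem_iUnion.1 hz
    have hfold : fold z ∈ U i := (fold_mem_iff (hUsym i)).2 hi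
    obtain ⟨Q, hQ, hmem⟩ := exists_isTile_mem_cell (s := true) (t := true) (hUopen i) hfold
      fun n => Int.floor_nonneg.2 (mul_nonneg (abs_nonneg z.im) (by positivity))
    exact mem_iUnion.2
      ⟨⟨Q, hQ⟩, ⟨fold z, mem_iUnion_of_mem i hfold⟩, hCW _ (Rect.cell_subset_box hmem), rfl⟩
  · obtain ⟨w, hw, hwz⟩ := hz
    have hwU : w.1 ∈ U (r Q) := hWO _ hw
    exact (fold_mem_iff (hUsym _)).1 (hwz ▸ hwU)
  · by_cases hz : fold z ∈ ⋃ i, U i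
    · obtain ⟨y, hy⟩ := hnerve ⟨fold z, hz⟩
      refine ⟨y, fun him => hy none (hCW none (abs_eq_zero.2 him)), fun Q hQ => hy (some Q) ?_⟩
      exact Subtype.val_injective.mem_set_image.1 hQ
    · refine ⟨z, id, fun Q hQ => ?_⟩
      obtain ⟨w, -, hw⟩ := hQ
      exact absurd (hw ▸ w.2) hz

end Refinement

theorem antisymmetric_H2_vanishes_general {ι : Type*} (U : ι → Set ℂ)
    (hUopen : ∀ i, IsOpen (U i)) (hUsym : ∀ i, (starRingEnd ℂ) '' U i = U i)
    (n : ι → ι → ι → ℤ) (halt : ∀ i j k, n i j k = -n i k j)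
    (hreal : ∀ i j k, (U i ∩ U j ∩ U k ∩ {z : ℂ | z.im = 0}).Nonempty → n i j k = 0)
    (hcoc : ∀ i j k l, (U i ∩ U j ∩ U k ∩ U l ∩ {z : ℂ | 0 < z.im}).Nonempty →
      n j k l - n i k l + n i j l - n i j k = 0) :
    ∃ (A : Type) (V : A → Set ℂ) (r : A → ι) (m : A → A → ℤ),
      (∀ a, IsOpen (V a)) ∧ (∀ a, (starRingEnd ℂ) '' V a = V a) ∧
      ⋃ i, U i ⊆ ⋃ a, V a ∧ (∀ a, V a ⊆ U (r a)) ∧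
      (∀ a b, m a b = -m b a) ∧
      (∀ a b, (V a ∩ V b ∩ {z : ℂ | z.im = 0}).Nonempty → m a b = 0) ∧
      (∀ a b c, (V a ∩ V b ∩ V c).Nonempty →
        n (r a) (r b) (r c) = m b c - m a c + m a b) := by
  choose r hr using fun Q : {Q // IsTile U Q} => Q.2.2.prop
  obtain ⟨V, hVopen, hVsym, hVcover, hVU, hnerve⟩ := exists_symmetric_refinement hUopen hUsym hr
  obtain ⟨m, hm, hmreal, hδ⟩ := exists_coboundary (isTiling_isTile hUopen)
    (n := fun a b c => n (r a) (r b) (r c)) (fun _ _ _ => halt _ _ _)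
    fun p hp a b c d ha hb hc hd => hcoc _ _ _ _
      ⟨p, ⟨⟨⟨hr a ha, hr b hb⟩, hr c hc⟩, hr d hd⟩, hp.1⟩
  refine ⟨_, V, r, m, hVopen, hVsym, hVcover, hVU, hm, ?_, ?_⟩
  · rintro a b ⟨z, ⟨ha, hb⟩, hz⟩
    obtain ⟨y, hy, hbox⟩ := hnerve z
    exact hmreal a b ⟨y, ⟨hbox a ha, hbox b hb⟩, hy hz⟩
  · rintro a b c ⟨z, ⟨ha, hb⟩, hc⟩
    obtain ⟨y, -, hbox⟩ := hnerve z
    have hya := hbox a ha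
    have hyb := hbox b hb
    have hyc := hbox c hc
    rcases (a.2.im_nonneg hya).eq_or_lt with him | him
    · rw [hmreal a b ⟨y, ⟨hya, hyb⟩, him.symm⟩, hmreal a c ⟨y, ⟨hya, hyc⟩, him.symm⟩,
        hmreal b c ⟨y, ⟨hyb, hyc⟩, him.symm⟩,
        hreal _ _ _ ⟨y, ⟨⟨hr a hya, hr b hyb⟩, hr c hyc⟩, him.symm⟩, sub_zero, add_zero]
    · exact (hδ y ⟨him, a, hya⟩ a b c hya hyb hyc).symm

/-- Vanishing of the antisymmetric second cohomology group `H²ₐ(D, ℤ)` of a symmetric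
planar open set, in Čech form: every antisymmetric integer-valued 2-cocycle on a
symmetric open covering of `D` becomes a coboundary on a symmetric open refinement. -/
theorem antisymmetric_H2_vanishes (D : Set ℂ)
    (hopen : IsOpen D) (hsym : (starRingEnd ℂ) '' D = D)
    {ι : Type} (U : ι → Set ℂ)
    (hUopen : ∀ i, IsOpen (U i)) (hUsym : ∀ i, (starRingEnd ℂ) '' U i = U i)
    (hUcover : D ⊆ ⋃ i, U i)
    (n : ι → ι → ι → ℤ)
    (halt₁ : ∀ i j k, n i j k = - n j i k)
    (halt₂ : ∀ i j k, n i j k = - n i k j)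
    (hreal : ∀ i j k, (U i ∩ U j ∩ U k ∩ {z : ℂ | z.im = 0}).Nonempty → n i j k = 0)
    (hcoc : ∀ i j k l, (U i ∩ U j ∩ U k ∩ U l ∩ {z : ℂ | 0 < z.im}).Nonempty →
      n j k l - n i k l + n i j l - n i j k = 0) :
    ∃ (A : Type) (V : A → Set ℂ) (r : A → ι) (m : A → A → ℤ),
      (∀ a, IsOpen (V a)) ∧
      (∀ a, (starRingEnd ℂ) '' V a = V a) ∧
      D ⊆ ⋃ a, V a ∧
      (∀ a, V a ⊆ U (r a)) ∧
      (∀ a b, m a b = - m b a) ∧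
      (∀ a b, (V a ∩ V b ∩ {z : ℂ | z.im = 0}).Nonempty → m a b = 0) ∧
      (∀ a b c, (V a ∩ V b ∩ V c ∩ {z : ℂ | 0 < z.im}).Nonempty →
        n (r a) (r b) (r c) = m b c - m a c + m a b) := by
  obtain ⟨A, V, r, m, hVopen, hVsym, hUV, hVU, hm, hmreal, hδ⟩ :=
    antisymmetric_H2_vanishes_general U hUopen hUsym n halt₂ hreal hcoc
  exact ⟨A, V, r, m, hVopen, hVsym, hUcover.trans hUV, hVU, hm, hmreal,
    fun a b c h => hδ a b c (h.mono inter_subset_left)⟩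
end
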